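/- arXiv:1807.05869 — 4 statements merged into one kernel-verified Lean document; each statement's English description precedes it below -/
import Mathlib

section
/- Let A be a graded Artinian algebra over a field k and let ℓ ∈ m_A be a homogeneous element. Then the Jordan type P_ℓ of multiplication by ℓ satisfies P_ℓ ≤ H(A)^∨ in the dominance order on partitions of dim_k A. -/
/-! Let `f` be multiplication by `ℓ`, or any endomorphism that strictly raises degrees. The heart
of the matter is that `rank (f ^ #S) ≤ ∑_{e ∉ S} dim A_e` for every finite set `S` of degrees.
To see it, sweep through the degrees `N = 0, 1, 2, …`, keeping the range of a power of `f` inside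
`X + ⨁_{e ≥ N} A_e` for a small subspace `X`: if `N ∈ S`, apply `f` once more, which maps the tail
into degrees `> N`; if `N ∉ S`, add `A_N` to `X`.

Given `i`, put `S = {e | dim A_e > i}` and `j = #S`. The sum of the `i` largest parts of `P` is at
most `i * j + ∑_p (p - j) = i * j + rank (f ^ j)`, hence at most
`i * #S + ∑_{e ∉ S} dim A_e = ∑_e min (dim A_e) i`, which is the sum of the first `i` parts of
`H(A)^∨`. -/

/-- `P` is the Jordan type (multiset of Jordan block sizes) of the `k`-linear
endomorphism `f`, characterized by the ranks of the powers of `f`. -/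
def IsJordanTypeOf {k A : Type*} [Field k] [AddCommGroup A] [Module k A]
    (f : A →ₗ[k] A) (P : Multiset ℕ) : Prop :=
  (∀ p ∈ P, 0 < p) ∧
  ∀ j : ℕ, Module.finrank k (LinearMap.range (f ^ j)) = (P.map (fun p => p - j)).sum

/-- Dominance order on partitions (as multisets of parts): `DomLE P Q` means
`P ≤ Q` in the dominance order. -/
def DomLE (P Q : Multiset ℕ) : Prop :=
  P.sum = Q.sum ∧
  ∀ i : ℕ, ((P.sort (· ≥ ·)).take i).sum ≤ ((Q.sort (· ≥ ·)).take i).sum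

/-- The conjugate partition of a Hilbert function `H` (whose values are bounded
by `n`): its `i`-th part (for `1 ≤ i ≤ n`) is `#{d | H d ≥ i}`; zero parts are
discarded. -/
noncomputable def conjHilb (H : ℕ → ℕ) (n : ℕ) : Multiset ℕ :=
  ((Multiset.range n).map (fun i => Set.ncard {d : ℕ | i + 1 ≤ H d})).filter (fun c => 0 < c)

open Module

section SortedParts

lemma sum_take_le_mul_add_sum_tsub (L : List ℕ) (i j : ℕ) :
    (L.take i).sum ≤ i * j + (L.map (· - j)).sum := by
  induction L generalizing i with
  | nil => simp
  | cons a L ih =>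
    cases i with
    | zero => simp
    | succ i =>
      have h := ih i
      simp only [List.take_succ_cons, List.sum_cons, List.map_cons, Nat.succ_mul]
      omega

lemma sum_take_filter_pos_of_pairwise_ge {α : Type*} [AddMonoid α] [LinearOrder α]
    [CanonicallyOrderedAdd α] {L : List α} (hL : L.Pairwise (· ≥ ·)) (i : ℕ) :
    ((L.filter (0 < ·)).take i).sum = (L.take i).sum := by
  induction hL generalizing i with
  | nil => simp
  | @cons a L ha _ ih =>
    cases i with
    | zero => simp
    | succ i =>
      rcases eq_zero_or_pos a with rfl | hpos
      · have hzero : ∀ b ∈ L, b = 0 := fun b hb => nonpos_iff_eq_zero.mp (ha b hb)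
        have hfilter : L.filter (0 < ·) = [] := by simpa using hzero
        have hsum : (L.take i).sum = 0 :=
          List.sum_eq_zero fun b hb => hzero b (List.mem_of_mem_take hb)
        simp [hfilter, hsum]
      · simp [hpos, ih i]

lemma multiset_sort_filter {α : Type*} (r : α → α → Prop) [DecidableRel r] [IsTrans α r]
    [Std.Antisymm r] [Std.Total r] (p : α → Prop) [DecidablePred p] (s : Multiset α) :
    (s.filter p).sort r = (s.sort r).filter p := by
  conv_lhs => rw [← s.sort_eq r, Multiset.filter_coe, Multiset.coe_sort]
  exact List.mergeSort_eq_self _ ((s.pairwise_sort r).filter _)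

lemma sort_map_range_of_antitone {α : Type*} [LinearOrder α] {c : ℕ → α} (hc : Antitone c)
    (n : ℕ) :
    ((Multiset.range n).map c).sort (· ≥ ·) = (List.range n).map c := by
  rw [← Multiset.coe_range, Multiset.map_coe, Multiset.coe_sort]
  refine List.mergeSort_eq_self _ (List.pairwise_map.mpr ?_)
  exact List.pairwise_lt_range.imp fun hab => hc hab.le

end SortedParts

section ConjugatePartition

lemma sum_card_filter_lt_eq_sum_min {ι : Type*} (s : Finset ι) (H : ι → ℕ) (m : ℕ) :
    ∑ i ∈ Finset.range m, (s.filter (i < H ·)).card = ∑ e ∈ s, min (H e) m := by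
  simp only [Finset.card_filter]
  rw [Finset.sum_comm]
  refine Finset.sum_congr rfl fun e _ => ?_
  rw [← Finset.card_filter, ← Finset.card_range (min (H e) m)]
  congr 1
  ext i
  simp [and_comm]

lemma sum_min_eq_mul_card_add_sum {ι : Type*} (s : Finset ι) (H : ι → ℕ) (i : ℕ) :
    ∑ e ∈ s, min (H e) i =
      i * (s.filter (i < H ·)).card + ∑ e ∈ s with ¬ i < H e, H e := by
  simp only [Finset.card_filter, Finset.sum_filter, Finset.mul_sum, ← Finset.sum_add_distrib]
  refine Finset.sum_congr rfl fun e _ => ?_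
  split_ifs <;> omega

lemma ncard_setOf_lt_eq_card_filter {ι : Type*} {s : Finset ι} {H : ι → ℕ}
    (hs : ∀ e ∉ s, H e = 0) (i : ℕ) :
    {e | i < H e}.ncard = (s.filter (i < H ·)).card := by
  rw [← Set.ncard_coe_finset]
  congr 1
  ext e
  have hmem : i < H e → e ∈ s := fun h => by_contra fun he => by simp [hs e he] at h
  simpa using hmem

variable {H : ℕ → ℕ} {n : ℕ} {s : Finset ℕ}

lemma sum_take_sort_conjHilb (hs : ∀ e ∉ s, H e = 0) (hn : ∀ e, H e ≤ n) (i : ℕ) :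
    (((conjHilb H n).sort (· ≥ ·)).take i).sum = ∑ e ∈ s, min (H e) i := by
  have hanti : Antitone fun i => (s.filter (i < H ·)).card := fun a b hab =>
    Finset.card_le_card (Finset.monotone_filter_right s fun _ _ => hab.trans_lt)
  have hconj : conjHilb H n =
      ((Multiset.range n).map fun i => (s.filter (i < H ·)).card).filter (0 < ·) := by
    simp only [conjHilb, Nat.succ_le_iff, ncard_setOf_lt_eq_card_filter hs]
  calc (((conjHilb H n).sort (· ≥ ·)).take i).sum
      = (((List.range n).map fun i => (s.filter (i < H ·)).card).take i).sum := by
        rw [hconj, multiset_sort_filter,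
          sum_take_filter_pos_of_pairwise_ge (Multiset.pairwise_sort _ _),
          sort_map_range_of_antitone hanti]
    _ = ∑ j ∈ Finset.range (min i n), (s.filter (j < H ·)).card := by
        rw [← List.map_take, List.take_range]; rfl
    _ = ∑ e ∈ s, min (H e) i := by
        rw [sum_card_filter_lt_eq_sum_min]
        exact Finset.sum_congr rfl fun e _ => by have := hn e; omega

lemma sum_conjHilb (hs : ∀ e ∉ s, H e = 0) (hn : ∀ e, H e ≤ n) :
    (conjHilb H n).sum = ∑ e ∈ s, H e := by
  have hlength : ((conjHilb H n).sort (· ≥ ·)).length ≤ n := by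
    rw [Multiset.length_sort]
    exact (Multiset.card_le_card (Multiset.filter_le _ _)).trans (by simp)
  calc (conjHilb H n).sum
      = (((conjHilb H n).sort (· ≥ ·)).take n).sum := by
        rw [List.take_of_length_le hlength, ← Multiset.sum_coe, Multiset.sort_eq]
    _ = ∑ e ∈ s, H e := by
        simp only [sum_take_sort_conjHilb hs hn, min_eq_left (hn _)]

end ConjugatePartition

namespace IsJordanTypeOf

variable {k V : Type*} [Field k] [AddCommGroup V] [Module k V] {f : V →ₗ[k] V} {P : Multiset ℕ}

lemma sum_eq_finrank (hP : IsJordanTypeOf f P) : P.sum = finrank k V := by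
  have h := hP.2 0
  rw [pow_zero, Module.End.one_eq_id, LinearMap.range_id, finrank_top] at h
  simpa using h.symm

lemma sum_take_sort_le (hP : IsJordanTypeOf f P) (i j : ℕ) :
    ((P.sort (· ≥ ·)).take i).sum ≤ i * j + finrank k (LinearMap.range (f ^ j)) := by
  have h : ((P.sort (· ≥ ·)).map (· - j)).sum = (P.map (· - j)).sum := by
    rw [← Multiset.sum_coe, ← Multiset.map_coe, Multiset.sort_eq]
  rw [hP.2 j, ← h]
  exact sum_take_le_mul_add_sum_tsub _ i j

end IsJordanTypeOf

section GradedPieces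

lemma mul_mem_iSup_gt {ι R A : Type*} [AddZeroClass ι] [Preorder ι] [AddRightStrictMono ι]
    [CommSemiring R] [Semiring A] [Algebra R A] (𝒜 : ι → Submodule R A) [SetLike.GradedMul 𝒜]
    {a x : A} {i : ι} (ha : a ∈ ⨆ e > 0, 𝒜 e) (hx : x ∈ 𝒜 i) : a * x ∈ ⨆ e > i, 𝒜 e := by
  have hle : ⨆ e > 0, 𝒜 e ≤ (⨆ e > i, 𝒜 e).comap (LinearMap.mulRight R x) :=
    iSup₂_le fun e he y hy =>
      le_iSup₂ (f := fun e (_ : e > i) => 𝒜 e) (e + i) (lt_add_of_pos_left i he)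
        (SetLike.mul_mem_graded hy hx)
  exact hle ha

lemma map_iSup_ge_le_iSup_gt {ι R M : Type*} [Preorder ι] [Semiring R] [AddCommMonoid M]
    [Module R M] {𝒜 : ι → Submodule R M} {f : M →ₗ[R] M}
    (hf : ∀ i, (𝒜 i).map f ≤ ⨆ e > i, 𝒜 e) (N : ι) :
    (⨆ e ≥ N, 𝒜 e).map f ≤ ⨆ e > N, 𝒜 e := by
  simp only [Submodule.map_iSup]
  exact iSup₂_le fun e he => (hf e).trans (biSup_mono fun _ h => lt_of_le_of_lt he h)

variable {k V : Type*} [DivisionRing k] [AddCommGroup V] [Module k V] [FiniteDimensional k V]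

lemma finrank_eq_sum_of_isInternal {ι : Type*} [DecidableEq ι] {𝒜 : ι → Submodule k V}
    (h𝒜 : DirectSum.IsInternal 𝒜) {s : Finset ι} (hs : ∀ e ∉ s, 𝒜 e = ⊥) :
    finrank k V = ∑ e ∈ s, finrank k (𝒜 e) := by
  have hinternal : DirectSum.IsInternal fun e : s => 𝒜 e := by
    refine (DirectSum.isInternal_submodule_iff_iSupIndep_and_iSup_eq_top _).mpr
      ⟨h𝒜.submodule_iSupIndep.comp Subtype.val_injective, ?_⟩
    rw [eq_top_iff, ← h𝒜.submodule_iSup_eq_top]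
    refine iSup_le fun e => ?_
    by_cases he : e ∈ s
    · exact le_iSup (fun e : s => 𝒜 e) ⟨e, he⟩
    · simp [hs e he]
  rw [← (LinearEquiv.ofBijective (DirectSum.coeLinearMap fun e : s => 𝒜 e) hinternal).finrank_eq,
    finrank_directSum, Finset.sum_coe_sort s fun e => finrank k (𝒜 e)]

variable {𝒜 : ℕ → Submodule k V} {f : V →ₗ[k] V}

lemma exists_range_pow_count_le_sup (htop : ⨆ i, 𝒜 i = ⊤)
    (hf : ∀ i, (𝒜 i).map f ≤ ⨆ e > i, 𝒜 e) (p : ℕ → Prop) [DecidablePred p] (N : ℕ) :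
    ∃ X : Submodule k V,
      finrank k X ≤ ∑ e ∈ Finset.range N with ¬ p e, finrank k (𝒜 e) ∧
      LinearMap.range (f ^ N.count p) ≤ X ⊔ ⨆ e ≥ N, 𝒜 e := by
  induction N with
  | zero => exact ⟨⊥, by simp, by simp [htop]⟩
  | succ N ih =>
    obtain ⟨X, hX, hrange⟩ := ih
    rw [Finset.sum_filter] at hX
    by_cases hp : p N
    · refine ⟨X.map f, ?_, ?_⟩
      · simpa [Finset.sum_filter, Finset.sum_range_succ, hp] using
          (Submodule.finrank_map_le f X).trans hX
      · rw [Nat.count_succ, if_pos hp, pow_succ', Module.End.mul_eq_comp, LinearMap.range_comp]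
        calc (LinearMap.range (f ^ N.count p)).map f
            ≤ (X ⊔ ⨆ e ≥ N, 𝒜 e).map f := Submodule.map_mono hrange
          _ = X.map f ⊔ (⨆ e ≥ N, 𝒜 e).map f := Submodule.map_sup ..
          _ ≤ X.map f ⊔ ⨆ e > N, 𝒜 e := sup_le_sup_left (map_iSup_ge_le_iSup_gt hf N) _
    · refine ⟨X ⊔ 𝒜 N, ?_, ?_⟩
      · rw [Finset.sum_filter, Finset.sum_range_succ, if_pos hp]
        exact (Submodule.finrank_add_le_finrank_add_finrank X (𝒜 N)).trans (by gcongr)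
      · rw [Nat.count_succ, if_neg hp, add_zero]
        calc LinearMap.range (f ^ N.count p)
            ≤ X ⊔ ⨆ e ≥ N, 𝒜 e := hrange
          _ = X ⊔ 𝒜 N ⊔ ⨆ e > N, 𝒜 e := by rw [biSup_ge_eq_sup, sup_assoc]

lemma finrank_range_pow_count_le (htop : ⨆ i, 𝒜 i = ⊤)
    (hf : ∀ i, (𝒜 i).map f ≤ ⨆ e > i, 𝒜 e) {N : ℕ} (hN : ∀ e ≥ N, 𝒜 e = ⊥)
    (p : ℕ → Prop) [DecidablePred p] :
    finrank k (LinearMap.range (f ^ N.count p)) ≤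
      ∑ e ∈ Finset.range N with ¬ p e, finrank k (𝒜 e) := by
  obtain ⟨X, hX, hrange⟩ := exists_range_pow_count_le_sup htop hf p N
  rw [iSup₂_eq_bot.mpr hN, sup_bot_eq] at hrange
  exact (Submodule.finrank_mono hrange).trans hX

end GradedPieces

theorem jordan_type_le_conj_hilbert_general
    {k V : Type*} [Field k] [AddCommGroup V] [Module k V] [FiniteDimensional k V]
    (𝒜 : ℕ → Submodule k V) (h𝒜 : DirectSum.IsInternal 𝒜)
    (f : V →ₗ[k] V) (hf : ∀ i, (𝒜 i).map f ≤ ⨆ e > i, 𝒜 e)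
    (P : Multiset ℕ) (hP : IsJordanTypeOf f P) :
    DomLE P (conjHilb (fun i => finrank k (𝒜 i)) (finrank k V)) := by
  obtain ⟨N, hN⟩ : ∃ N, ∀ e ≥ N, 𝒜 e = ⊥ := by
    have hfin := WellFoundedGT.finite_ne_bot_of_iSupIndep h𝒜.submodule_iSupIndep
    simpa [Nat.cofinite_eq_atTop] using hfin.eventually_cofinite_notMem
  set H : ℕ → ℕ := fun i => finrank k (𝒜 i)
  have hbot : ∀ e ∉ Finset.range N, 𝒜 e = ⊥ := by simpa using hN
  have hzero : ∀ e ∉ Finset.range N, H e = 0 := fun e he => by simp [H, hbot e he]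
  have hle : ∀ e, H e ≤ finrank k V := fun e => (𝒜 e).finrank_le
  refine ⟨?_, fun i => ?_⟩
  · rw [hP.sum_eq_finrank, sum_conjHilb hzero hle, finrank_eq_sum_of_isInternal h𝒜 hbot]
  · set j := N.count (i < H ·) with hj
    calc ((P.sort (· ≥ ·)).take i).sum
        ≤ i * j + finrank k (LinearMap.range (f ^ j)) := hP.sum_take_sort_le i j
      _ ≤ i * j + ∑ e ∈ Finset.range N with ¬ i < H e, H e := by
          gcongr
          exact finrank_range_pow_count_le h𝒜.submodule_iSup_eq_top hf hN _
      _ = ∑ e ∈ Finset.range N, min (H e) i := by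
          rw [sum_min_eq_mul_card_add_sum, hj, Nat.count_eq_card_filter_range]
      _ = (((conjHilb H (finrank k V)).sort (· ≥ ·)).take i).sum :=
          (sum_take_sort_conjHilb hzero hle i).symm

/-- Let `A` be a graded Artinian algebra over a field `k` (finite dimensional,
with `A_0 = k·1`), and let `ℓ ∈ m_A` be a homogeneous element (of some degree
`d ≥ 1`).  Then the Jordan type `P_ℓ` of multiplication by `ℓ` satisfies
`P_ℓ ≤ H(A)^∨` in the dominance order. -/
theorem jordan_type_le_conj_hilbert
    {k A : Type*} [Field k] [CommRing A] [Algebra k A]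
    (𝒜 : ℕ → Submodule k A) [GradedAlgebra 𝒜] [FiniteDimensional k A]
    (hconn : 𝒜 0 = Submodule.span k {(1 : A)})
    (d : ℕ) (hd : 1 ≤ d) (ℓ : A) (hℓ : ℓ ∈ 𝒜 d)
    (P : Multiset ℕ) (hP : IsJordanTypeOf (LinearMap.mulLeft k ℓ) P) :
    DomLE P (conjHilb (fun i => Module.finrank k (𝒜 i)) (Module.finrank k A)) := by
  have hpos : ℓ ∈ ⨆ e > 0, 𝒜 e := le_iSup₂ (f := fun e (_ : e > 0) => 𝒜 e) d hd hℓ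
  exact jordan_type_le_conj_hilbert_general 𝒜 (DirectSum.Decomposition.isInternal 𝒜) _
    (fun _ => Submodule.map_le_iff_le_comap.mpr fun _ => mul_mem_iSup_gt 𝒜 hpos) P hP
end

section
/- Let A be a graded Artinian algebra over a field k and let ℓ ∈ m_A be a homogeneous element. Then ℓ is a strong Lefschetz element of A if and only if ℓ lies in A_1 and its Jordan type satisfies P_ℓ = H(A)^∨. -/
/-- A linear form `ℓ` is strong Lefschetz for the graded algebra `A` with
grading `𝒜` if `ℓ ∈ 𝒜 1` and all multiplication maps `×ℓ^j : 𝒜 i → 𝒜 (i+j)`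
have maximal rank. -/
def IsSL {k A : Type*} [Field k] [CommRing A] [Algebra k A]
    (𝒜 : ℕ → Submodule k A) (ℓ : A) : Prop :=
  ℓ ∈ 𝒜 1 ∧ ∀ i j : ℕ,
    Module.finrank k ((𝒜 i).map (LinearMap.mulLeft k (ℓ ^ j))) =
      min (Module.finrank k (𝒜 i)) (Module.finrank k (𝒜 (i + j)))

/-!
Let `S p` be the set of degrees in which the Hilbert function `H` exceeds `p`, so that the parts of
the conjugate partition are the numbers `#(S p)`. The rank `ρ i j` of `×ℓ^j : A_i → A_{i+j}` is at
most the minimum `m i j` of `H` on `[i, i + j]`, since the map factors through all the pieces in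
between, and `m i j ≤ min (H i) (H (i + j))`. By the layer-cake formula `∑ i, m i j` counts, over
all `p`, the runs of `j + 1` consecutive elements of `S p`, and there are at most `#(S p) - j` of
them, with equality for all `j` exactly when `S p` is an interval. Hence there are two chains
* `ρ i j ≤ m i j ≤ min (H i) (H (i + j))`,
* `rank (×ℓ^j) = ∑ i, ρ i j ≤ ∑ i, m i j ≤ ∑ p, (#(S p) - j)`.

The strong Lefschetz property is equality of the ends of the first chain, and `P_ℓ = H(A)^∨` is
equality of the ends of the second. The first inequalities of the two chains become equalities
together, and so do the second ones, namely when every `S p` is an interval.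
-/

lemma eq_iff_eq_and_eq_of_le_of_le {α : Type*} [PartialOrder α] {a b c : α} (hab : a ≤ b)
    (hbc : b ≤ c) : a = c ↔ a = b ∧ b = c :=
  ⟨fun h => ⟨hab.antisymm (h ▸ hbc), hbc.antisymm (h ▸ hab)⟩, fun h => h.1.trans h.2⟩

/-! ### Runs of consecutive elements -/

section Runs

variable {S : Finset ℕ} {i j : ℕ}

/-- The starting points of the runs of `j + 1` consecutive natural numbers contained in `S`. -/
def runStarts (S : Finset ℕ) (j : ℕ) : Finset ℕ :=
  {i ∈ S | Finset.Icc i (i + j) ⊆ S}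

lemma mem_runStarts : i ∈ runStarts S j ↔ Finset.Icc i (i + j) ⊆ S := by
  rw [runStarts, Finset.mem_filter, and_iff_right_iff_imp]
  exact fun h => h (Finset.left_mem_Icc.mpr (Nat.le_add_right i j))

-- The run that starts last provides `j` further elements of `S`, none of which starts a run.
lemma card_runStarts_le (S : Finset ℕ) (j : ℕ) : (runStarts S j).card ≤ S.card - j := by
  rcases (runStarts S j).eq_empty_or_nonempty with hempty | hne
  · simp [hempty]
  obtain ⟨m, hm, hmax⟩ := (runStarts S j).exists_max_image id hne
  have hdisj : Disjoint (runStarts S j) (Finset.Ioc m (m + j)) :=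
    Finset.disjoint_left.mpr fun a ha hma => (hmax a ha).not_gt (Finset.mem_Ioc.mp hma).1
  have hsub : runStarts S j ∪ Finset.Ioc m (m + j) ⊆ S :=
    Finset.union_subset (Finset.filter_subset _ _)
      (Finset.Ioc_subset_Icc_self.trans (mem_runStarts.mp hm))
  have hcard := Finset.card_le_card hsub
  rw [Finset.card_union_of_disjoint hdisj, Nat.card_Ioc] at hcard
  omega

lemma card_sub_le_card_runStarts (hS : (S : Set ℕ).OrdConnected) (j : ℕ) :
    S.card - j ≤ (runStarts S j).card := by
  rcases S.eq_empty_or_nonempty with hempty | hne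
  · simp [hempty]
  obtain ⟨b, hb, hmax⟩ := S.exists_max_image id hne
  -- Only the last `j` elements of the interval `S` fail to start a run.
  have hsub : S ⊆ runStarts S j ∪ Finset.Ico (b + 1 - j) (b + 1) := by
    intro a ha
    rcases le_or_gt (a + j) b with hab | hab
    · refine Finset.mem_union_left _ (mem_runStarts.mpr fun x hx => ?_)
      rw [Finset.mem_Icc] at hx
      exact hS.out ha hb ⟨hx.1, hx.2.trans hab⟩
    · have hle : a ≤ b := hmax a ha
      exact Finset.mem_union_right _ (Finset.mem_Ico.mpr (by omega))
  have hcard := (Finset.card_le_card hsub).trans (Finset.card_union_le _ _)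
  rw [Nat.card_Ico] at hcard
  omega

theorem forall_card_runStarts_eq_iff_ordConnected :
    (∀ j, (runStarts S j).card = S.card - j) ↔ (S : Set ℕ).OrdConnected := by
  refine ⟨fun h => ?_, fun hS j =>
    (card_runStarts_le S j).antisymm (card_sub_le_card_runStarts hS j)⟩
  rcases S.eq_empty_or_nonempty with hempty | hne
  · simp [hempty, Set.ordConnected_empty]
  have hpos := hne.card_pos
  obtain ⟨a, ha⟩ : (runStarts S (S.card - 1)).Nonempty := by
    rw [← Finset.card_pos, h]
    omega
  -- A run of length `#S` in `S` is all of `S`.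
  have hS : Finset.Icc a (a + (S.card - 1)) = S :=
    Finset.eq_of_subset_of_card_le (mem_runStarts.mp ha) (by rw [Nat.card_Icc]; omega)
  rw [← hS, Finset.coe_Icc]
  exact Set.ordConnected_Icc

end Runs

/-! ### Minima over intervals and superlevel sets -/

section IntervalMin

variable {H : ℕ →₀ ℕ} {n p i j : ℕ}

/-- The set of points at which `H` exceeds `p`. -/
def superlevel {ι : Type*} (H : ι →₀ ℕ) (p : ℕ) : Finset ι :=
  {i ∈ H.support | p < H i}

lemma mem_superlevel {ι : Type*} {H : ι →₀ ℕ} {i : ι} : i ∈ superlevel H p ↔ p < H i := by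
  rw [superlevel, Finset.mem_filter, Finsupp.mem_support_iff, and_iff_right_iff_imp]
  exact fun h => h.ne_bot

/-- The minimum of `H` on the interval `[i, i + j]`. -/
def intervalMin {α : Type*} [LinearOrder α] (H : ℕ → α) (i j : ℕ) : α :=
  (Finset.Icc i (i + j)).inf' (Finset.nonempty_Icc.mpr (Nat.le_add_right i j)) H

lemma intervalMin_le {α : Type*} [LinearOrder α] {H : ℕ → α} {t : ℕ}
    (ht : t ∈ Finset.Icc i (i + j)) : intervalMin H i j ≤ H t :=
  Finset.inf'_le H ht

lemma intervalMin_le_min {α : Type*} [LinearOrder α] (H : ℕ → α) (i j : ℕ) :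
    intervalMin H i j ≤ min (H i) (H (i + j)) :=
  le_min (intervalMin_le (Finset.left_mem_Icc.mpr (Nat.le_add_right i j)))
    (intervalMin_le (Finset.right_mem_Icc.mpr (Nat.le_add_right i j)))

lemma lt_intervalMin_iff : p < intervalMin H i j ↔ i ∈ runStarts (superlevel H p) j := by
  simp only [intervalMin, Finset.lt_inf'_iff, mem_runStarts, Finset.subset_iff, mem_superlevel]

lemma intervalMin_eq_sum_ite (hn : ∀ i, H i ≤ n) (i j : ℕ) :
    intervalMin H i j =
      ∑ p ∈ Finset.range n, if i ∈ runStarts (superlevel H p) j then 1 else 0 := by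
  have hle : intervalMin H i j ≤ n :=
    ((intervalMin_le_min H i j).trans (min_le_left _ _)).trans (hn i)
  have hfilter : {p ∈ Finset.range n | i ∈ runStarts (superlevel H p) j} =
      Finset.range (intervalMin H i j) := by
    ext p
    rw [Finset.mem_filter, Finset.mem_range, Finset.mem_range, ← lt_intervalMin_iff]
    exact and_iff_right_of_imp fun hp => hp.trans_le hle
  rw [← Finset.card_filter, hfilter, Finset.card_range]

theorem sum_intervalMin_eq_sum_card_runStarts (hn : ∀ i, H i ≤ n) (j : ℕ) :
    ∑ i ∈ H.support, intervalMin H i j =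
      ∑ p ∈ Finset.range n, (runStarts (superlevel H p) j).card := by
  have hsub (p : ℕ) : runStarts (superlevel H p) j ⊆ H.support :=
    (Finset.filter_subset _ _).trans (Finset.filter_subset _ _)
  simp only [intervalMin_eq_sum_ite hn]
  rw [Finset.sum_comm]
  refine Finset.sum_congr rfl fun p _ => ?_
  rw [← Finset.card_filter, Finset.filter_mem_eq_inter, Finset.inter_eq_right.mpr (hsub p)]

lemma sum_intervalMin_le (hn : ∀ i, H i ≤ n) (j : ℕ) :
    ∑ i ∈ H.support, intervalMin H i j ≤
      ∑ p ∈ Finset.range n, ((superlevel H p).card - j) := by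
  rw [sum_intervalMin_eq_sum_card_runStarts hn]
  exact Finset.sum_le_sum fun p _ => card_runStarts_le _ j

theorem forall_sum_intervalMin_eq_iff_ordConnected (hn : ∀ i, H i ≤ n) :
    (∀ j, ∑ i ∈ H.support, intervalMin H i j =
        ∑ p ∈ Finset.range n, ((superlevel H p).card - j)) ↔
      ∀ p ∈ Finset.range n, (superlevel H p : Set ℕ).OrdConnected := by
  simp only [sum_intervalMin_eq_sum_card_runStarts hn,
    Finset.sum_eq_sum_iff_of_le fun p _ => card_runStarts_le (superlevel H p) _,
    ← forall_card_runStarts_eq_iff_ordConnected]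
  exact ⟨fun h p hp j => h j p hp, fun h j p hp => h p hp j⟩

theorem forall_intervalMin_eq_min_iff_ordConnected (hn : ∀ i, H i ≤ n) :
    (∀ i j, intervalMin H i j = min (H i) (H (i + j))) ↔
      ∀ p ∈ Finset.range n, (superlevel H p : Set ℕ).OrdConnected := by
  constructor
  · refine fun h p _ => ⟨fun x hx y hy z hz => ?_⟩
    rw [Finset.mem_coe, mem_superlevel] at hx hy ⊢
    obtain ⟨j, rfl⟩ := Nat.exists_eq_add_of_le (hz.1.trans hz.2)
    calc p < min (H x) (H (x + j)) := lt_min hx hy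
      _ = intervalMin H x j := (h x j).symm
      _ ≤ H z := intervalMin_le (Finset.mem_Icc.mpr hz)
  · refine fun h i j => (intervalMin_le_min H i j).antisymm (le_of_forall_lt fun p hp => ?_)
    obtain ⟨hi, hj⟩ := lt_min_iff.mp hp
    rw [lt_intervalMin_iff, mem_runStarts, ← Finset.coe_subset, Finset.coe_Icc]
    exact (h p (Finset.mem_range.mpr (hi.trans_le (hn i)))).out
      (mem_superlevel.mpr hi) (mem_superlevel.mpr hj)

theorem forall_eq_min_iff_forall_sum_eq (hn : ∀ i, H i ≤ n) {ρ : ℕ → ℕ → ℕ}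
    (hρ : ∀ i j, ρ i j ≤ intervalMin H i j) :
    (∀ i j, ρ i j = min (H i) (H (i + j))) ↔
      ∀ j, ∑ i ∈ H.support, ρ i j = ∑ p ∈ Finset.range n, ((superlevel H p).card - j) := by
  have hsum : (∀ i j, ρ i j = intervalMin H i j) ↔
      ∀ j, ∑ i ∈ H.support, ρ i j = ∑ i ∈ H.support, intervalMin H i j := by
    simp only [Finset.sum_eq_sum_iff_of_le fun i _ => hρ i _]
    refine ⟨fun h j i _ => h i j, fun h i j => ?_⟩
    by_cases hi : i ∈ H.support
    · exact h j i hi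
    · have hzero : intervalMin H i j ≤ 0 :=
        Finsupp.notMem_support_iff.mp hi ▸ (intervalMin_le_min H i j).trans (min_le_left _ _)
      exact (hρ i j).antisymm (hzero.trans (Nat.zero_le _))
  calc (∀ i j, ρ i j = min (H i) (H (i + j)))
    _ ↔ (∀ i j, ρ i j = intervalMin H i j) ∧
          ∀ i j, intervalMin H i j = min (H i) (H (i + j)) := by
      simp only [eq_iff_eq_and_eq_of_le_of_le (hρ _ _) (intervalMin_le_min H _ _), forall_and]
    _ ↔ (∀ j, ∑ i ∈ H.support, ρ i j = ∑ i ∈ H.support, intervalMin H i j) ∧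
          ∀ j, ∑ i ∈ H.support, intervalMin H i j =
            ∑ p ∈ Finset.range n, ((superlevel H p).card - j) := by
      rw [hsum, forall_intervalMin_eq_min_iff_ordConnected hn,
        forall_sum_intervalMin_eq_iff_ordConnected hn]
    _ ↔ ∀ j, ∑ i ∈ H.support, ρ i j =
          ∑ p ∈ Finset.range n, ((superlevel H p).card - j) := by
      rw [← forall_and]
      exact forall_congr' fun j => (eq_iff_eq_and_eq_of_le_of_le
        (Finset.sum_le_sum fun i _ => hρ i j) (sum_intervalMin_le hn j)).symm

lemma sum_map_sub_conjHilb (H : ℕ →₀ ℕ) (n j : ℕ) :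
    ((conjHilb H n).map (fun p => p - j)).sum =
      ∑ p ∈ Finset.range n, ((superlevel H p).card - j) := by
  have hncard (p : ℕ) : Set.ncard {d : ℕ | p + 1 ≤ H d} = (superlevel H p).card := by
    rw [← Set.ncard_coe_finset]
    exact congrArg Set.ncard (Set.ext fun d => mem_superlevel.symm)
  -- The discarded parts are zero, and so are their truncated differences `0 - j`.
  have hfilter (s : Multiset ℕ) :
      ((s.filter (0 < ·)).map (· - j)).sum = (s.map (· - j)).sum := by
    induction s using Multiset.induction_on with
    | empty => simp
    | cons a s ih => rcases a.eq_zero_or_pos with ha | ha <;> simp [ha, ih]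
  rw [conjHilb, hfilter, Multiset.map_map]
  simp only [Function.comp_def, hncard]
  rfl

end IntervalMin

/-! ### Ranks of homogeneous maps -/

lemma map_pow_le_of_map_le {R M : Type*} [Semiring R] [AddCommMonoid M] [Module R M]
    {ℳ : ℕ → Submodule R M} {f : M →ₗ[R] M} (hf : ∀ i, (ℳ i).map f ≤ ℳ (i + 1)) (i j : ℕ) :
    (ℳ i).map (f ^ j) ≤ ℳ (i + j) := by
  induction j with
  | zero => exact (Submodule.map_id _).le
  | succ j ih =>
    rw [pow_succ', Module.End.mul_eq_comp, Submodule.map_comp]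
    exact (Submodule.map_mono ih).trans (hf (i + j))

lemma map_mulLeft_le_of_mem {R A ι : Type*} [CommSemiring R] [Semiring A] [Algebra R A]
    [AddCommMagma ι] {𝒜 : ι → Submodule R A} [SetLike.GradedMul 𝒜] {a : A} {d : ι}
    (ha : a ∈ 𝒜 d) (i : ι) : (𝒜 i).map (LinearMap.mulLeft R a) ≤ 𝒜 (i + d) := by
  rintro _ ⟨x, hx, rfl⟩
  exact add_comm d i ▸ SetLike.GradedMul.mul_mem ha hx

section Rank

variable {k V ι : Type*} [DivisionRing k] [AddCommGroup V] [Module k V]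

lemma finrank_finset_sup_of_iSupIndep {W : ι → Submodule k V} [∀ i, FiniteDimensional k (W i)]
    (hW : iSupIndep W) (s : Finset ι) :
    Module.finrank k (s.sup W : Submodule k V) = ∑ i ∈ s, Module.finrank k (W i) := by
  classical
  induction s using Finset.induction_on with
  | empty => simp
  | insert a s ha ih =>
    have hdisj : Disjoint (W a) (s.sup W) := Finset.sup_eq_iSup s W ▸ hW.disjoint_biSup ha
    rw [Finset.sup_insert, Finset.sum_insert ha, ← ih,
      ← Submodule.finrank_sup_add_finrank_inf_eq (W a) (s.sup W), hdisj.eq_bot, finrank_bot,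
      add_zero]

lemma finrank_range_eq_sum_finrank_map {V' : Type*} [AddCommGroup V'] [Module k V']
    {f : V →ₗ[k] V'} {𝒱 : ι → Submodule k V} [∀ i, FiniteDimensional k (𝒱 i)]
    (htop : ⨆ i, 𝒱 i = ⊤) (hind : iSupIndep fun i => (𝒱 i).map f) {s : Finset ι}
    (hs : ∀ i ∉ s, 𝒱 i = ⊥) :
    Module.finrank k (LinearMap.range f) = ∑ i ∈ s, Module.finrank k ((𝒱 i).map f) := by
  have hsup : s.sup 𝒱 = ⊤ := by
    rw [eq_top_iff, ← htop]
    refine iSup_le fun i => ?_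
    by_cases hi : i ∈ s
    · exact Finset.le_sup hi
    · exact (hs i hi).trans_le bot_le
  have hrange : LinearMap.range f = s.sup fun i => (𝒱 i).map f := by
    simp only [LinearMap.range_eq_map, ← hsup, Finset.sup_eq_iSup, Submodule.map_iSup]
  rw [hrange, finrank_finset_sup_of_iSupIndep hind]

variable [FiniteDimensional k V] {𝒱 : ℕ → Submodule k V} {f : V →ₗ[k] V}

-- For `t` between `i` and `i + j` the map `f ^ j` factors through the piece of degree `t`.
lemma finrank_map_pow_le_intervalMin (hf : ∀ i, (𝒱 i).map f ≤ 𝒱 (i + 1)) (i j : ℕ) :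
    Module.finrank k ((𝒱 i).map (f ^ j)) ≤ intervalMin (fun t => Module.finrank k (𝒱 t)) i j := by
  refine Finset.le_inf' _ _ fun t ht => ?_
  rw [Finset.mem_Icc] at ht
  obtain ⟨a, rfl⟩ := Nat.exists_eq_add_of_le ht.1
  obtain ⟨b, rfl⟩ := Nat.exists_eq_add_of_le (Nat.add_le_add_iff_left.mp ht.2)
  rw [add_comm a b, pow_add, Module.End.mul_eq_comp, Submodule.map_comp]
  exact (Submodule.finrank_map_le _ _).trans
    (Submodule.finrank_mono (map_pow_le_of_map_le hf i a))

/-- The Hilbert function of a finite-dimensional graded vector space, as a finitely supported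
function of the degree. -/
noncomputable def hilbertFunction (h𝒱 : iSupIndep 𝒱) : ℕ →₀ ℕ :=
  Finsupp.ofSupportFinite (fun i => Module.finrank k (𝒱 i)) <|
    (WellFoundedGT.finite_ne_bot_of_iSupIndep h𝒱).subset fun _ hi =>
      mt Submodule.finrank_eq_zero.mpr hi

lemma finrank_range_pow_eq_sum (h𝒱 : DirectSum.IsInternal 𝒱)
    (hf : ∀ i, (𝒱 i).map f ≤ 𝒱 (i + 1)) (j : ℕ) :
    Module.finrank k (LinearMap.range (f ^ j)) =
      ∑ i ∈ (hilbertFunction h𝒱.submodule_iSupIndep).support,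
        Module.finrank k ((𝒱 i).map (f ^ j)) :=
  finrank_range_eq_sum_finrank_map h𝒱.submodule_iSup_eq_top
    ((h𝒱.submodule_iSupIndep.comp (add_left_injective j)).mono fun i => map_pow_le_of_map_le hf i j)
    fun _ hi => Submodule.finrank_eq_zero.mp (Finsupp.notMem_support_iff.mp hi)

end Rank

theorem isSL_iff_jordan_type_eq_conj_hilbert_general
    {k V : Type*} [Field k] [AddCommGroup V] [Module k V] [FiniteDimensional k V]
    {𝒱 : ℕ → Submodule k V} (h𝒱 : DirectSum.IsInternal 𝒱)
    {f : V →ₗ[k] V} (hf : ∀ i, (𝒱 i).map f ≤ 𝒱 (i + 1)) :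
    (∀ i j, Module.finrank k ((𝒱 i).map (f ^ j)) =
        min (Module.finrank k (𝒱 i)) (Module.finrank k (𝒱 (i + j)))) ↔
      IsJordanTypeOf f (conjHilb (fun i => Module.finrank k (𝒱 i)) (Module.finrank k V)) := by
  let H := hilbertFunction h𝒱.submodule_iSupIndep
  have hpos : ∀ p ∈ conjHilb H (Module.finrank k V), 0 < p :=
    fun _ hp => (Multiset.mem_filter.mp hp).2
  change _ ↔ IsJordanTypeOf f (conjHilb H (Module.finrank k V))
  simp only [IsJordanTypeOf, and_iff_right hpos, finrank_range_pow_eq_sum h𝒱 hf,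
    sum_map_sub_conjHilb]
  exact forall_eq_min_iff_forall_sum_eq (H := H) (fun i => Submodule.finrank_le (𝒱 i))
    (finrank_map_pow_le_intervalMin hf)

/-- Let `A` be a graded Artinian algebra over a field `k` and `ℓ ∈ m_A` a
homogeneous element.  Then `ℓ` is a strong Lefschetz element of `A` if and only
if `ℓ ∈ A_1` and its Jordan type satisfies `P_ℓ = H(A)^∨`. -/
theorem isSL_iff_jordan_type_eq_conj_hilbert
    {k A : Type*} [Field k] [CommRing A] [Algebra k A]
    (𝒜 : ℕ → Submodule k A) [GradedAlgebra 𝒜] [FiniteDimensional k A]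
    (hconn : 𝒜 0 = Submodule.span k {(1 : A)})
    (d : ℕ) (hd : 1 ≤ d) (ℓ : A) (hℓ : ℓ ∈ 𝒜 d) :
    IsSL 𝒜 ℓ ↔
      (ℓ ∈ 𝒜 1 ∧ IsJordanTypeOf (LinearMap.mulLeft k ℓ)
        (conjHilb (fun i => Module.finrank k (𝒜 i)) (Module.finrank k A))) := by
  refine and_congr_right fun hℓ₁ => .trans (forall₂_congr fun i j => by rw [LinearMap.pow_mulLeft])
    (isSL_iff_jordan_type_eq_conj_hilbert_general
      (DirectSum.Decomposition.isInternal 𝒜) (map_mulLeft_le_of_mem hℓ₁))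
end

section
/- Let A be a standard graded Artinian algebra over a field k (i.e., A is generated in degree 1 over A_0 = k) whose Hilbert function H(A) is unimodal. Then A has an element ℓ ∈ m_A of strong Lefschetz Jordan type if and only if A has a strong Lefschetz element ℓ' ∈ A_1. -/
/-- A sequence of integers is unimodal. -/
def Unimodal (H : ℕ → ℕ) : Prop :=
  ∃ c : ℕ, (∀ i j : ℕ, i ≤ j → j ≤ c → H i ≤ H j) ∧ (∀ i j : ℕ, c ≤ i → i ≤ j → H j ≤ H i)

/-- The indices in `W` carry the `#W` largest values of `H`, ties being broken arbitrarily. The sum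
of `H` over the complement of `W` is then the rank of the `#W`-th power of an endomorphism whose
Jordan type is the conjugate of `H`. -/
def CarriesLargest (H : ℕ → ℕ) (W : Finset ℕ) : Prop :=
  ∀ d ∉ W, ∀ e ∈ W, H d ≤ H e

/-- `H` is unimodal with its maximum at `c`; thus `Unimodal H` means that a peak exists. -/
def IsPeak (H : ℕ → ℕ) (c : ℕ) : Prop :=
  MonotoneOn H (Set.Iic c) ∧ AntitoneOn H (Set.Ici c)

section Sequences

variable {H : ℕ → ℕ}

lemma exists_carriesLargest_singleton (h : BddAbove (Set.range H)) :
    ∃ c, CarriesLargest H {c} := by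
  obtain ⟨_, ⟨c, rfl⟩, hc⟩ := h.exists_isGreatest_of_nonempty (Set.range_nonempty H)
  refine ⟨c, fun d _ e he => ?_⟩
  rw [Finset.mem_singleton.1 he]
  exact hc ⟨d, rfl⟩

lemma CarriesLargest.superlevel_subset_or_subset {W : Finset ℕ} (hW : CarriesLargest H W)
    (m : ℕ) : {d | m ≤ H d} ⊆ (W : Set ℕ) ∨ (W : Set ℕ) ⊆ {d | m ≤ H d} := by
  by_contra! h
  obtain ⟨⟨d, hd, hdW⟩, e, heW, he⟩ := And.imp Set.not_subset.1 Set.not_subset.1 h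
  exact he (le_trans (α := ℕ) hd (hW d hdW e heW))

lemma card_sub_card_eq_card_sdiff {α : Type*} [DecidableEq α] {S W : Finset α}
    (h : S ⊆ W ∨ W ⊆ S) : S.card - W.card = (S \ W).card := by
  rcases h with h | h
  · rw [Finset.sdiff_eq_empty_iff_subset.2 h, Finset.card_empty,
      Nat.sub_eq_zero_of_le (Finset.card_le_card h)]
  · rw [Finset.card_sdiff_of_subset h]

lemma sum_map_sub_filter_pos (M : Multiset ℕ) (s : ℕ) :
    ((M.filter (0 < ·)).map (· - s)).sum = (M.map (· - s)).sum := by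
  induction M using Multiset.induction_on with
  | empty => rfl
  | cons a M ih => rcases Nat.eq_zero_or_pos a with rfl | ha <;> simp [*]

lemma CarriesLargest.sum_map_sub_conjHilb {n : ℕ} {W : Finset ℕ} (hW : CarriesLargest H W)
    (hfin : (Function.support H).Finite) (hn : ∀ d, H d ≤ n) :
    ((conjHilb H n).map (· - W.card)).sum = ∑ᶠ d ∈ (W : Set ℕ)ᶜ, H d := by
  classical
  set D := hfin.toFinset
  have hD {i d : ℕ} (h : i < H d) : d ∈ D := hfin.mem_toFinset.2 (Nat.ne_zero_of_lt h)
  have hlevel (i : ℕ) : {d | i + 1 ≤ H d} = (D.filter (i < H ·) : Set ℕ) := by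
    ext d
    simpa using fun h => hD h
  have hpart (i : ℕ) :
      {d | i + 1 ≤ H d}.ncard - W.card = ((D \ W).filter (i < H ·)).card := by
    have hcomp := hW.superlevel_subset_or_subset (i + 1)
    rw [hlevel, Finset.coe_subset, Finset.coe_subset] at hcomp
    rw [hlevel, Set.ncard_coe_finset, card_sub_card_eq_card_sdiff hcomp,
      Finset.sdiff_eq_filter, Finset.sdiff_eq_filter, Finset.filter_comm]
  have hcol (d : ℕ) : ((Finset.range n).filter (· < H d)).card = H d := by
    have : (Finset.range n).filter (· < H d) = Finset.range (H d) := by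
      ext i
      have := hn d
      simp only [Finset.mem_filter, Finset.mem_range]
      omega
    rw [this, Finset.card_range]
  calc ((conjHilb H n).map (· - W.card)).sum
      = ∑ i ∈ Finset.range n, ({d | i + 1 ≤ H d}.ncard - W.card) := by
        rw [conjHilb, sum_map_sub_filter_pos, Multiset.map_map]; rfl
    _ = ∑ i ∈ Finset.range n, ((D \ W).filter (i < H ·)).card := by simp_rw [hpart]
    _ = ∑ d ∈ D \ W, ((Finset.range n).filter (· < H d)).card :=
        Finset.sum_card_bipartiteAbove_eq_sum_card_bipartiteBelow _
    _ = ∑ d ∈ D \ W, H d := by simp_rw [hcol]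
    _ = ∑ᶠ d ∈ (W : Set ℕ)ᶜ, H d := by
        rw [finsum_mem_eq_sum_of_inter_support_eq]
        ext d
        simp only [Set.mem_inter_iff, Set.mem_compl_iff, Finset.mem_coe, Finset.mem_sdiff, D,
          Set.Finite.mem_toFinset]
        tauto

/-- The `s` largest values of a unimodal sequence are found by growing an interval from the peak,
each time towards its larger neighbour. -/
lemma IsPeak.exists_carriesLargest_Ico {c : ℕ} (hc : IsPeak H c) (s : ℕ) :
    ∃ t ≤ c, c ≤ t + s ∧ CarriesLargest H (Finset.Ico t (t + s)) := by
  induction s with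
  | zero => exact ⟨c, le_rfl, le_rfl, fun d _ e he => by simp at he⟩
  | succ s ih =>
    obtain ⟨t, htc, hct, hW⟩ := ih
    have hleft {d e : ℕ} (hde : d ≤ e) (he : e ≤ c) : H d ≤ H e := hc.1 (hde.trans he) he hde
    have hright {d e : ℕ} (hd : c ≤ d) (hde : d ≤ e) : H e ≤ H d := hc.2 hd (hd.trans hde) hde
    by_cases hgrow : 0 < t ∧ H (t + s) ≤ H (t - 1)
    · refine ⟨t - 1, by omega, by omega, fun d hd e he => ?_⟩
      rw [Finset.mem_Ico] at hd he
      by_cases het : e = t - 1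
      · subst het
        rcases lt_or_ge d t with hdt | hdt
        · exact hleft (by omega) (by omega)
        · exact (hright hct (by omega)).trans hgrow.2
      · exact hW d (by grind) e (by grind)
    · refine ⟨t, htc, by omega, fun d hd e he => ?_⟩
      rw [Finset.mem_Ico] at hd he
      by_cases het : e = t + s
      · subst het
        rcases lt_or_ge d t with hdt | hdt
        · exact (hleft (by omega : d ≤ t - 1) (by omega)).trans (by omega)
        · exact hright hct (by omega)
      · exact hW d (by grind) e (by grind)

lemma IsPeak.le_add_of_lt {c s t d : ℕ} (hc : IsPeak H c) (htc : t ≤ c)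
    (hW : CarriesLargest H (Finset.Ico t (t + s))) (hd : d < t) : H d ≤ H (d + s) := by
  rcases lt_or_ge (d + s) t with h | h
  · exact hc.1 (Set.mem_Iic.2 (by omega)) (Set.mem_Iic.2 (by omega)) (Nat.le_add_right d s)
  · exact hW d (by grind) (d + s) (by grind)

lemma IsPeak.add_le_of_le {c s t d : ℕ} (hc : IsPeak H c) (hct : c ≤ t + s)
    (hW : CarriesLargest H (Finset.Ico t (t + s))) (hd : t ≤ d) : H (d + s) ≤ H d := by
  rcases lt_or_ge d (t + s) with h | h
  · exact hW (d + s) (by grind) d (by grind)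
  · exact hc.2 (Set.mem_Ici.2 (by omega)) (Set.mem_Ici.2 (by omega)) (Nat.le_add_right d s)

end Sequences

section LinearAlgebra

open Module

variable {K V V' : Type*} [DivisionRing K] [AddCommGroup V] [Module K V] [AddCommGroup V']
  [Module K V']

lemma finrank_biSup_of_iSupIndep {ι : Type*} [FiniteDimensional K V] {p : ι → Submodule K V}
    (hp : iSupIndep p) (s : Set ι) :
    finrank K (⨆ i ∈ s, p i : Submodule K V) = ∑ᶠ i ∈ s, finrank K (p i) := by
  classical
  have hfinset (u : Finset ι) :
      finrank K (⨆ i ∈ u, p i : Submodule K V) = ∑ i ∈ u, finrank K (p i) := by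
    induction u using Finset.induction_on with
    | empty => simp
    | insert a u ha ih =>
      have hdisj : Disjoint (p a) (⨆ i ∈ u, p i) := hp.disjoint_biSup (y := (u : Set ι)) ha
      rw [Finset.iSup_insert, Finset.sum_insert ha, ← ih,
        ← Submodule.finrank_sup_add_finrank_inf_eq, hdisj.eq_bot, finrank_bot, add_zero]
  have hfin : (s ∩ {i | p i ≠ ⊥}).Finite :=
    (WellFoundedGT.finite_ne_bot_of_iSupIndep hp).inter_of_right s
  have hsup : ⨆ i ∈ s, p i = ⨆ i ∈ hfin.toFinset, p i := by
    refine le_antisymm (iSup₂_le fun i hi => ?_) (biSup_mono fun i hi => by simp_all)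
    by_cases hbot : p i = ⊥
    · simp [hbot]
    · exact le_biSup p (by simp [hi, hbot])
  rw [hsup, hfinset, finsum_mem_eq_sum_of_inter_support_eq]
  ext i
  simp

lemma finrank_map_eq_iff_disjoint_ker [FiniteDimensional K V] {f : V →ₗ[K] V'}
    {p : Submodule K V} : finrank K (p.map f) = finrank K p ↔ Disjoint p f.ker := by
  have := (f.domRestrict p).finrank_range_add_finrank_ker
  rw [LinearMap.range_domRestrict] at this
  rw [← LinearMap.injective_domRestrict_iff, ← LinearMap.ker_eq_bot,
    ← Submodule.finrank_eq_zero]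
  omega

lemma finrank_map_eq_min_iff [FiniteDimensional K V] [FiniteDimensional K V'] {f : V →ₗ[K] V'}
    {p : Submodule K V} {q : Submodule K V'} (h : p.map f ≤ q) :
    finrank K (p.map f) = min (finrank K p) (finrank K q) ↔ Disjoint p f.ker ∨ p.map f = q := by
  have hp := Submodule.finrank_map_le f p
  have hq := Submodule.finrank_mono h
  have hq_eq : p.map f = q ↔ finrank K (p.map f) = finrank K q :=
    ⟨fun h => by rw [h], Submodule.eq_of_le_of_finrank_eq h⟩
  rw [← finrank_map_eq_iff_disjoint_ker, hq_eq]
  omega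

lemma disjoint_comap_iff {f : V →ₗ[K] V'} {p : Submodule K V} {q : Submodule K V'} :
    Disjoint p (q.comap f) ↔ Disjoint p f.ker ∧ Disjoint (p.map f) q := by
  simp only [Submodule.disjoint_def, Submodule.mem_comap, LinearMap.mem_ker, Submodule.mem_map]
  constructor
  · intro h
    refine ⟨fun x hx h0 => h x hx (h0 ▸ q.zero_mem), ?_⟩
    rintro _ ⟨x, hx, rfl⟩ hq
    rw [h x hx hq, map_zero]
  · exact fun h x hx hq => h.1 x hx (h.2 _ ⟨x, hx, rfl⟩ hq)

/-- The right-hand side of the rank equality is the largest rank compatible with `f U ⊆ U'`. -/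
lemma finrank_range_eq_add_iff [FiniteDimensional K V] [FiniteDimensional K V'] {f : V →ₗ[K] V'}
    {L U : Submodule K V} {U' : Submodule K V'} (hLU : L ⊔ U = ⊤) (hU : U.map f ≤ U') :
    finrank K f.range = finrank K L + finrank K U' ↔
      U.map f = U' ∧ Disjoint L (U'.comap f) := by
  have hrange : f.range = L.map f ⊔ U.map f := by rw [← Submodule.map_sup, hLU, f.range_eq_map]
  have hsum := Submodule.finrank_sup_add_finrank_inf_eq (L.map f) (U.map f)
  have hL := Submodule.finrank_map_le f L
  have hU' := Submodule.finrank_mono hU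
  rw [hrange, disjoint_comap_iff, ← finrank_map_eq_iff_disjoint_ker]
  constructor
  · intro h
    have hmap : U.map f = U' := Submodule.eq_of_le_of_finrank_eq hU (by omega)
    refine ⟨hmap, by omega, ?_⟩
    rw [disjoint_iff, ← hmap, ← Submodule.finrank_eq_zero]
    omega
  · rintro ⟨rfl, hinj, hdisj⟩
    rw [hdisj.eq_bot, finrank_bot] at hsum
    omega

end LinearAlgebra

section Graded

open Module DirectSum

variable {k A : Type*} [Field k] [CommRing A] [Algebra k A] (𝒜 : ℕ → Submodule k A)

/-- The sum of the graded pieces whose degrees lie in `S`. The terms `A_{≥ t}` of the degree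
filtration are `gradedPart 𝒜 (Set.Ici t)`; in particular `m_A` is the case `t = 1`. -/
def gradedPart (S : Set ℕ) : Submodule k A := ⨆ d ∈ S, 𝒜 d

lemma le_gradedPart {S : Set ℕ} {d : ℕ} (hd : d ∈ S) : 𝒜 d ≤ gradedPart 𝒜 S :=
  le_biSup 𝒜 hd

lemma gradedPart_Ici (t : ℕ) : gradedPart 𝒜 (Set.Ici t) = ⨆ d, 𝒜 (d + t) :=
  iSup_ge_eq_iSup_nat_add 𝒜 t

lemma gradedPart_union (S T : Set ℕ) :
    gradedPart 𝒜 (S ∪ T) = gradedPart 𝒜 S ⊔ gradedPart 𝒜 T :=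
  iSup_union

variable [GradedAlgebra 𝒜]

lemma iSupIndep_of_gradedAlgebra : iSupIndep 𝒜 :=
  (Decomposition.isInternal 𝒜).submodule_iSupIndep

lemma gradedPart_univ : gradedPart 𝒜 Set.univ = ⊤ := by
  rw [gradedPart, iSup_univ, (Decomposition.isInternal 𝒜).submodule_iSup_eq_top]

lemma finrank_gradedPart [FiniteDimensional k A] (S : Set ℕ) :
    finrank k (gradedPart 𝒜 S) = ∑ᶠ d ∈ S, finrank k (𝒜 d) :=
  finrank_biSup_of_iSupIndep (iSupIndep_of_gradedAlgebra 𝒜) S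

lemma finrank_gradedPart_union [FiniteDimensional k A] {S T : Set ℕ} (h : Disjoint S T) :
    finrank k (gradedPart 𝒜 (S ∪ T)) =
      finrank k (gradedPart 𝒜 S) + finrank k (gradedPart 𝒜 T) := by
  have hdisj : Disjoint (gradedPart 𝒜 S) (gradedPart 𝒜 T) :=
    (iSupIndep_of_gradedAlgebra 𝒜).disjoint_biSup_biSup h
  rw [gradedPart_union, ← Submodule.finrank_sup_add_finrank_inf_eq, hdisj.eq_bot, finrank_bot,
    add_zero]

lemma exists_forall_ge_eq_bot [FiniteDimensional k A] : ∃ N, ∀ d ≥ N, 𝒜 d = ⊥ := by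
  obtain ⟨N, hN⟩ :=
    (WellFoundedGT.finite_ne_bot_of_iSupIndep (iSupIndep_of_gradedAlgebra 𝒜)).bddAbove
  refine ⟨N + 1, fun d hd => ?_⟩
  by_contra hne
  exact absurd (hN hne) (by omega)

variable {𝒜}

lemma mem_gradedPart_iff {S : Set ℕ} {x : A} :
    x ∈ gradedPart 𝒜 S ↔ ∀ d ∉ S, GradedAlgebra.proj 𝒜 d x = 0 := by
  classical
  constructor
  · intro hx d hd
    have hle : gradedPart 𝒜 S ≤ (GradedAlgebra.proj 𝒜 d).ker :=
      iSup₂_le fun e he y hy => decompose_of_mem_ne 𝒜 hy (by rintro rfl; exact hd he)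
    exact hle hx
  · intro h
    rw [← sum_support_decompose 𝒜 x]
    refine sum_mem fun d hd => le_gradedPart 𝒜 ?_ (SetLike.coe_mem _)
    by_contra hdS
    exact (GradedAlgebra.mem_support_iff 𝒜 x d).1 hd (h d hdS)

lemma proj_of_mem {d : ℕ} {x : A} (hx : x ∈ 𝒜 d) : GradedAlgebra.proj 𝒜 d x = x :=
  decompose_of_mem_same 𝒜 hx

lemma proj_mem (d : ℕ) (x : A) : GradedAlgebra.proj 𝒜 d x ∈ 𝒜 d :=
  SetLike.coe_mem _

lemma proj_mul_eq_sum_antidiagonal (n : ℕ) (x y : A) :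
    GradedAlgebra.proj 𝒜 n (x * y) = ∑ ij ∈ Finset.HasAntidiagonal.antidiagonal n,
      GradedAlgebra.proj 𝒜 ij.1 x * GradedAlgebra.proj 𝒜 ij.2 y := by
  simp only [GradedAlgebra.proj_apply, decompose_mul, coe_mul_apply_eq_sum_antidiagonal]

lemma mul_mem_gradedPart_Ici {a b : ℕ} {x y : A} (hx : x ∈ gradedPart 𝒜 (Set.Ici a))
    (hy : y ∈ gradedPart 𝒜 (Set.Ici b)) : x * y ∈ gradedPart 𝒜 (Set.Ici (a + b)) := by
  rw [mem_gradedPart_iff] at *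
  intro d hd
  rw [proj_mul_eq_sum_antidiagonal]
  refine Finset.sum_eq_zero fun ij hij => ?_
  rw [Finset.HasAntidiagonal.mem_antidiagonal] at hij
  rw [Set.mem_Ici] at hd
  rcases lt_or_ge ij.1 a with h | h
  · rw [hx ij.1 (not_le.2 h), zero_mul]
  · rw [hy ij.2 (by rw [Set.mem_Ici]; omega), mul_zero]

lemma proj_add_mul {a b : ℕ} {x y : A} (hx : x ∈ gradedPart 𝒜 (Set.Ici a))
    (hy : y ∈ gradedPart 𝒜 (Set.Ici b)) :
    GradedAlgebra.proj 𝒜 (a + b) (x * y) =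
      GradedAlgebra.proj 𝒜 a x * GradedAlgebra.proj 𝒜 b y := by
  rw [mem_gradedPart_iff] at hx hy
  rw [proj_mul_eq_sum_antidiagonal, Finset.sum_eq_single (a, b)]
  · intro ij hij hne
    rw [Finset.HasAntidiagonal.mem_antidiagonal] at hij
    rcases lt_or_ge ij.1 a with h | h
    · rw [hx ij.1 (not_le.2 h), zero_mul]
    · have hlt : ij.2 < b := by
        by_contra! hle
        exact hne (Prod.ext (by omega) (by omega))
      rw [hy ij.2 (not_le.2 hlt), mul_zero]
  · simp

lemma pow_mem_of_mem_one {x : A} (hx : x ∈ 𝒜 1) (s : ℕ) : x ^ s ∈ 𝒜 s := by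
  simpa using SetLike.pow_mem_graded s hx

lemma pow_mem_gradedPart_Ici {x : A} (hx : x ∈ gradedPart 𝒜 (Set.Ici 1)) (s : ℕ) :
    x ^ s ∈ gradedPart 𝒜 (Set.Ici s) := by
  induction s with
  | zero => exact le_gradedPart 𝒜 Set.self_mem_Ici (pow_zero x ▸ SetLike.GradedOne.one_mem)
  | succ s ih => exact pow_succ x s ▸ mul_mem_gradedPart_Ici ih hx

lemma proj_pow {x : A} (hx : x ∈ gradedPart 𝒜 (Set.Ici 1)) (s : ℕ) :
    GradedAlgebra.proj 𝒜 s (x ^ s) = GradedAlgebra.proj 𝒜 1 x ^ s := by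
  induction s with
  | zero => rw [pow_zero, pow_zero, proj_of_mem SetLike.GradedOne.one_mem]
  | succ s ih => rw [pow_succ, proj_add_mul (pow_mem_gradedPart_Ici hx s) hx, ih, pow_succ]

lemma map_mulLeft_gradedPart_Ici_le {s : ℕ} {y : A} (hy : y ∈ gradedPart 𝒜 (Set.Ici s)) (t : ℕ) :
    (gradedPart 𝒜 (Set.Ici t)).map (LinearMap.mulLeft k y) ≤ gradedPart 𝒜 (Set.Ici (t + s)) := by
  rintro _ ⟨x, hx, rfl⟩
  rw [add_comm]
  exact mul_mem_gradedPart_Ici hy hx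

lemma map_mulLeft_le {s : ℕ} {y : A} (hy : y ∈ 𝒜 s) (d : ℕ) :
    (𝒜 d).map (LinearMap.mulLeft k y) ≤ 𝒜 (d + s) := by
  rintro _ ⟨x, hx, rfl⟩
  rw [add_comm]
  exact SetLike.mul_mem_graded hy hx

lemma finrank_range_mulLeft_eq_iff [FiniteDimensional k A] {s t : ℕ} {y : A}
    (hy : y ∈ gradedPart 𝒜 (Set.Ici s)) :
    finrank k (LinearMap.mulLeft k y).range = ∑ᶠ d ∈ (Set.Ico t (t + s))ᶜ, finrank k (𝒜 d) ↔
      (gradedPart 𝒜 (Set.Ici t)).map (LinearMap.mulLeft k y) = gradedPart 𝒜 (Set.Ici (t + s)) ∧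
      Disjoint (gradedPart 𝒜 (Set.Iio t))
        ((gradedPart 𝒜 (Set.Ici (t + s))).comap (LinearMap.mulLeft k y)) := by
  have hcompl : (Set.Ico t (t + s))ᶜ = Set.Iio t ∪ Set.Ici (t + s) := by grind
  have hdisj : Disjoint (Set.Iio t) (Set.Ici (t + s)) := Set.disjoint_left.2 (by grind)
  have hsup : gradedPart 𝒜 (Set.Iio t) ⊔ gradedPart 𝒜 (Set.Ici t) = ⊤ := by
    rw [← gradedPart_union, Set.Iio_union_Ici, gradedPart_univ]
  rw [← finrank_gradedPart, hcompl, finrank_gradedPart_union 𝒜 hdisj]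
  exact finrank_range_eq_add_iff hsup (map_mulLeft_gradedPart_Ici_le hy t)

lemma finrank_range_mulLeft_of_mem [FiniteDimensional k A] {s t : ℕ} {y : A} (hy : y ∈ 𝒜 s)
    (hinj : ∀ d < t, Disjoint (𝒜 d) (LinearMap.mulLeft k y).ker)
    (hsurj : ∀ d ≥ t, (𝒜 d).map (LinearMap.mulLeft k y) = 𝒜 (d + s)) :
    finrank k (LinearMap.mulLeft k y).range =
      ∑ᶠ d ∈ (Set.Ico t (t + s))ᶜ, finrank k (𝒜 d) := by
  rw [finrank_range_mulLeft_eq_iff (le_gradedPart 𝒜 Set.self_mem_Ici hy)]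
  constructor
  · rw [gradedPart_Ici, gradedPart_Ici, Submodule.map_iSup]
    exact iSup_congr fun d => by rw [hsurj _ (Nat.le_add_left t d), add_assoc]
  · rw [Submodule.disjoint_def]
    intro x hx hyx
    rw [Submodule.mem_comap, LinearMap.mulLeft_apply, mem_gradedPart_iff] at hyx
    have hproj (d : ℕ) : GradedAlgebra.proj 𝒜 d x = 0 := by
      rcases lt_or_ge d t with hd | hd
      · refine Submodule.disjoint_def.1 (hinj d hd) _ (proj_mem d x) ?_
        have := hyx (s + d) (by rw [Set.mem_Ici]; omega)
        rwa [GradedAlgebra.proj_apply, coe_decompose_mul_add_of_left_mem 𝒜 hy] at this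
      · exact mem_gradedPart_iff.1 hx d (not_lt.2 hd)
    have hbot : x ∈ gradedPart 𝒜 ∅ := mem_gradedPart_iff.2 fun d _ => hproj d
    simpa [gradedPart] using hbot

lemma map_mulLeft_proj_of_map_gradedPart {s t : ℕ} {y : A} (hy : y ∈ gradedPart 𝒜 (Set.Ici s))
    (h : (gradedPart 𝒜 (Set.Ici t)).map (LinearMap.mulLeft k y) =
      gradedPart 𝒜 (Set.Ici (t + s))) :
    (𝒜 t).map (LinearMap.mulLeft k (GradedAlgebra.proj 𝒜 s y)) = 𝒜 (t + s) := by
  refine (map_mulLeft_le (proj_mem s y) t).antisymm fun w hw => ?_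
  obtain ⟨u, hu, rfl⟩ := h.ge (le_gradedPart 𝒜 Set.self_mem_Ici hw)
  refine ⟨GradedAlgebra.proj 𝒜 t u, proj_mem t u, ?_⟩
  rw [LinearMap.mulLeft_apply, ← proj_add_mul hy hu, add_comm]
  exact proj_of_mem hw

lemma disjoint_ker_mulLeft_proj {s d : ℕ} {y : A} (hy : y ∈ gradedPart 𝒜 (Set.Ici s))
    (h : Disjoint (𝒜 d)
      ((gradedPart 𝒜 (Set.Ici (d + 1 + s))).comap (LinearMap.mulLeft k y))) :
    Disjoint (𝒜 d) (LinearMap.mulLeft k (GradedAlgebra.proj 𝒜 s y)).ker := by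
  rw [Submodule.disjoint_def] at *
  intro x hx h0
  have hx' := le_gradedPart 𝒜 (Set.self_mem_Ici (a := d)) hx
  refine h x hx (mem_gradedPart_iff.2 fun e he => ?_)
  rw [Set.mem_Ici, not_le] at he
  rcases (show e = s + d ∨ e < s + d by omega) with rfl | hlt
  · rw [LinearMap.mulLeft_apply, proj_add_mul hy hx', proj_of_mem hx]
    exact h0
  · exact mem_gradedPart_iff.1 (mul_mem_gradedPart_Ici hy hx') e (by rw [Set.mem_Ici]; omega)

lemma isPeak_finrank [FiniteDimensional k A] {c : ℕ} {y : A} (hy : y ∈ 𝒜 1)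
    (hinj : ∀ d < c, Disjoint (𝒜 d) (LinearMap.mulLeft k y).ker)
    (hsurj : ∀ d ≥ c, (𝒜 d).map (LinearMap.mulLeft k y) = 𝒜 (d + 1)) :
    IsPeak (fun d => finrank k (𝒜 d)) c := by
  constructor
  · refine monotoneOn_of_le_add_one Set.ordConnected_Iic fun d _ _ hd => ?_
    rw [← finrank_map_eq_iff_disjoint_ker.2 (hinj d hd)]
    exact Submodule.finrank_mono (map_mulLeft_le hy d)
  · refine antitoneOn_of_add_one_le Set.ordConnected_Ici fun d _ hd _ => ?_
    rw [← hsurj d hd]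
    exact Submodule.finrank_map_le _ _

lemma isSL_iff [FiniteDimensional k A] {ℓ : A} :
    IsSL 𝒜 ℓ ↔ ℓ ∈ 𝒜 1 ∧ ∀ i j, Disjoint (𝒜 i) (LinearMap.mulLeft k (ℓ ^ j)).ker ∨
      (𝒜 i).map (LinearMap.mulLeft k (ℓ ^ j)) = 𝒜 (i + j) := by
  refine and_congr_right fun hℓ => forall₂_congr fun i j => ?_
  exact finrank_map_eq_min_iff (map_mulLeft_le (pow_mem_of_mem_one hℓ j) i)

lemma sum_map_sub_conjHilb_finrank [FiniteDimensional k A] {W : Finset ℕ}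
    (hW : CarriesLargest (fun d => finrank k (𝒜 d)) W) :
    ((conjHilb (fun d => finrank k (𝒜 d)) (finrank k A)).map (· - W.card)).sum =
      ∑ᶠ d ∈ (W : Set ℕ)ᶜ, finrank k (𝒜 d) := by
  refine hW.sum_map_sub_conjHilb ?_ fun d => Submodule.finrank_le _
  refine (WellFoundedGT.finite_ne_bot_of_iSupIndep (iSupIndep_of_gradedAlgebra 𝒜)).subset ?_
  exact fun d hd => mt Submodule.finrank_eq_zero.2 hd

lemma IsJordanTypeOf.map_mulLeft_pow_eq_and_disjoint [FiniteDimensional k A] {ℓ : A} {s t : ℕ}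
    (h : IsJordanTypeOf (LinearMap.mulLeft k ℓ)
      (conjHilb (fun d => finrank k (𝒜 d)) (finrank k A)))
    (hℓ : ℓ ∈ gradedPart 𝒜 (Set.Ici 1))
    (hW : CarriesLargest (fun d => finrank k (𝒜 d)) (Finset.Ico t (t + s))) :
    (gradedPart 𝒜 (Set.Ici t)).map (LinearMap.mulLeft k (ℓ ^ s)) =
        gradedPart 𝒜 (Set.Ici (t + s)) ∧
      Disjoint (gradedPart 𝒜 (Set.Iio t))
        ((gradedPart 𝒜 (Set.Ici (t + s))).comap (LinearMap.mulLeft k (ℓ ^ s))) := by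
  have hcard : (Finset.Ico t (t + s)).card = s := by rw [Nat.card_Ico, Nat.add_sub_cancel_left]
  have hsum := sum_map_sub_conjHilb_finrank hW
  rw [hcard, Finset.coe_Ico] at hsum
  rw [← finrank_range_mulLeft_eq_iff (pow_mem_gradedPart_Ici hℓ s), ← hsum,
    ← LinearMap.pow_mulLeft]
  exact h.2 s

lemma disjoint_ker_mulLeft_mul {d e : ℕ} {y z : A} (hz : z ∈ 𝒜 e)
    (hdz : Disjoint (𝒜 d) (LinearMap.mulLeft k z).ker)
    (hdy : Disjoint (𝒜 (d + e)) (LinearMap.mulLeft k y).ker) :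
    Disjoint (𝒜 d) (LinearMap.mulLeft k (y * z)).ker := by
  rw [LinearMap.mulLeft_mul, LinearMap.ker_comp, disjoint_comap_iff]
  exact ⟨hdz, hdy.mono_left (map_mulLeft_le hz d)⟩

lemma disjoint_ker_mulLeft_of_add {d e : ℕ} {y z : A} (hz : z ∈ 𝒜 e)
    (hdz : Disjoint (𝒜 d) (LinearMap.mulLeft k z).ker)
    (hdy : Disjoint (𝒜 (d + e)) (LinearMap.mulLeft k y).ker) :
    Disjoint (𝒜 d) (LinearMap.mulLeft k y).ker := by
  refine (disjoint_ker_mulLeft_mul hz hdz hdy).mono_right ?_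
  rw [mul_comm, LinearMap.mulLeft_mul]
  exact LinearMap.ker_le_ker_comp _ _

lemma disjoint_ker_mulLeft_pow {c : ℕ} {y : A} (hy : y ∈ 𝒜 1)
    (hinj : ∀ d < c, Disjoint (𝒜 d) (LinearMap.mulLeft k y).ker) {d e : ℕ} (hde : d + e ≤ c) :
    Disjoint (𝒜 d) (LinearMap.mulLeft k (y ^ e)).ker := by
  induction e with
  | zero => rw [pow_zero, LinearMap.mulLeft_one, LinearMap.ker_id]; exact disjoint_bot_right
  | succ e ih =>
    rw [pow_succ']
    exact disjoint_ker_mulLeft_mul (pow_mem_of_mem_one hy e) (ih (by omega)) (hinj _ hde)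

lemma IsJordanTypeOf.disjoint_ker_mulLeft_proj_one_pow [FiniteDimensional k A]
    {ℓ : A} {c s t d : ℕ}
    (h : IsJordanTypeOf (LinearMap.mulLeft k ℓ)
      (conjHilb (fun d => finrank k (𝒜 d)) (finrank k A)))
    (hℓ : ℓ ∈ gradedPart 𝒜 (Set.Ici 1))
    (hinj : ∀ d < c, Disjoint (𝒜 d) (LinearMap.mulLeft k (GradedAlgebra.proj 𝒜 1 ℓ)).ker)
    (htc : t ≤ c) (hW : CarriesLargest (fun d => finrank k (𝒜 d)) (Finset.Ico t (t + s)))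
    (hd : d < t) :
    Disjoint (𝒜 d) (LinearMap.mulLeft k (GradedAlgebra.proj 𝒜 1 ℓ ^ s)).ker := by
  obtain ⟨e, rfl⟩ := Nat.exists_eq_add_of_lt hd
  have htop : Disjoint (𝒜 (d + e)) (LinearMap.mulLeft k (GradedAlgebra.proj 𝒜 1 ℓ ^ s)).ker := by
    rw [← proj_pow hℓ]
    exact disjoint_ker_mulLeft_proj (pow_mem_gradedPart_Ici hℓ s)
      ((h.map_mulLeft_pow_eq_and_disjoint hℓ hW).2.mono_left (le_gradedPart 𝒜 (by simp)))
  exact disjoint_ker_mulLeft_of_add (pow_mem_of_mem_one (proj_mem 1 ℓ) e)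
    (disjoint_ker_mulLeft_pow (proj_mem 1 ℓ) hinj (by omega)) htop

lemma graded_add_eq_mul (hstd : ∀ i, 𝒜 (i + 1) = 𝒜 1 * 𝒜 i) (i j : ℕ) :
    𝒜 (i + j) = 𝒜 i * 𝒜 j := by
  induction i with
  | zero =>
    refine le_antisymm (fun x hx => ?_) (Submodule.mul_le.2 fun a ha b => SetLike.mul_mem_graded ha)
    rw [zero_add] at hx
    exact one_mul x ▸ Submodule.mul_mem_mul SetLike.GradedOne.one_mem hx
  | succ i ih => rw [Nat.succ_add_eq_add_succ, Nat.add_succ, hstd, ih, hstd i, mul_assoc]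

lemma map_mulLeft_eq_of_le (hstd : ∀ i, 𝒜 (i + 1) = 𝒜 1 * 𝒜 i) {s i d : ℕ} {y : A}
    (hy : y ∈ 𝒜 s) (hid : i ≤ d)
    (h : (𝒜 i).map (LinearMap.mulLeft k y) = 𝒜 (i + s)) :
    (𝒜 d).map (LinearMap.mulLeft k y) = 𝒜 (d + s) := by
  obtain ⟨n, rfl⟩ := Nat.exists_eq_add_of_le' hid
  refine (map_mulLeft_le hy _).antisymm ?_
  rw [add_assoc, graded_add_eq_mul hstd, ← h]
  refine Submodule.mul_le.2 ?_
  rintro a ha _ ⟨v, hv, rfl⟩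
  exact ⟨a * v, SetLike.mul_mem_graded ha hv, mul_left_comm y a v⟩

lemma mul_eq_zero_of_mem_gradedPart_Ici (hstd : ∀ i, 𝒜 (i + 1) = 𝒜 1 * 𝒜 i) {e : ℕ}
    {x y : A} (h : ∀ v ∈ 𝒜 e, v * x = 0) (hy : y ∈ gradedPart 𝒜 (Set.Ici e)) : y * x = 0 := by
  have hle : gradedPart 𝒜 (Set.Ici e) ≤ (LinearMap.mulRight k x).ker := by
    rw [gradedPart_Ici]
    refine iSup_le fun i => ?_
    rw [graded_add_eq_mul hstd]
    refine Submodule.mul_le.2 fun a _ b hb => ?_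
    rw [LinearMap.mem_ker, LinearMap.mulRight_apply, mul_assoc, h b hb, mul_zero]
  exact hle hy

/-- A form killed by `A₁` is killed by `y`, so there is no socle below degree `c`; hence a nonzero
form killed by the linear part of `y` has a nonzero multiple in degree `c - 1` killed by it too. -/
lemma disjoint_ker_mulLeft_proj_one (hstd : ∀ i, 𝒜 (i + 1) = 𝒜 1 * 𝒜 i) {c : ℕ} {y : A}
    (hy : y ∈ gradedPart 𝒜 (Set.Ici 1))
    (h : Disjoint (gradedPart 𝒜 (Set.Iio c))
      ((gradedPart 𝒜 (Set.Ici (c + 1))).comap (LinearMap.mulLeft k y))) {d : ℕ} (hd : d < c) :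
    Disjoint (𝒜 d) (LinearMap.mulLeft k (GradedAlgebra.proj 𝒜 1 y)).ker := by
  obtain ⟨n, rfl⟩ := Nat.exists_eq_add_of_lt hd
  clear hd
  induction n generalizing d with
  | zero => exact disjoint_ker_mulLeft_proj hy (h.mono_left (le_gradedPart 𝒜 (by simp)))
  | succ n ih =>
    have hnext : Disjoint (𝒜 (1 + d)) (LinearMap.mulLeft k (GradedAlgebra.proj 𝒜 1 y)).ker :=
      ih (by rwa [show 1 + d + n + 1 = d + (n + 1) + 1 by omega])
    rw [Submodule.disjoint_def] at h hnext ⊢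
    intro x hx hker
    rw [LinearMap.mem_ker, LinearMap.mulLeft_apply] at hker
    have hsocle (v : A) (hv : v ∈ 𝒜 1) : v * x = 0 := by
      refine hnext _ (SetLike.mul_mem_graded hv hx) ?_
      rw [LinearMap.mem_ker, LinearMap.mulLeft_apply, mul_left_comm, hker, mul_zero]
    refine h x (le_gradedPart 𝒜 (by simp) hx) ?_
    rw [Submodule.mem_comap, LinearMap.mulLeft_apply,
      mul_eq_zero_of_mem_gradedPart_Ici hstd hsocle hy]
    exact zero_mem _

lemma IsJordanTypeOf.map_mulLeft_proj_one_pow_eq [FiniteDimensional k A]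
    (hstd : ∀ i, 𝒜 (i + 1) = 𝒜 1 * 𝒜 i) {ℓ : A} {s t d : ℕ}
    (h : IsJordanTypeOf (LinearMap.mulLeft k ℓ)
      (conjHilb (fun d => finrank k (𝒜 d)) (finrank k A)))
    (hℓ : ℓ ∈ gradedPart 𝒜 (Set.Ici 1))
    (hW : CarriesLargest (fun d => finrank k (𝒜 d)) (Finset.Ico t (t + s))) (hd : t ≤ d) :
    (𝒜 d).map (LinearMap.mulLeft k (GradedAlgebra.proj 𝒜 1 ℓ ^ s)) = 𝒜 (d + s) := by
  rw [← proj_pow hℓ]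
  exact map_mulLeft_eq_of_le hstd (proj_mem s _) hd (map_mulLeft_proj_of_map_gradedPart
    (pow_mem_gradedPart_Ici hℓ s) (h.map_mulLeft_pow_eq_and_disjoint hℓ hW).1)

theorem IsJordanTypeOf.isSL_proj_one [FiniteDimensional k A]
    (hstd : ∀ i, 𝒜 (i + 1) = 𝒜 1 * 𝒜 i) {ℓ : A}
    (h : IsJordanTypeOf (LinearMap.mulLeft k ℓ)
      (conjHilb (fun d => finrank k (𝒜 d)) (finrank k A)))
    (hℓ : ℓ ∈ gradedPart 𝒜 (Set.Ici 1)) : IsSL 𝒜 (GradedAlgebra.proj 𝒜 1 ℓ) := by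
  have hbdd : BddAbove (Set.range fun d => finrank k (𝒜 d)) :=
    ⟨finrank k A, by rintro _ ⟨d, rfl⟩; exact Submodule.finrank_le _⟩
  obtain ⟨c, hcmax⟩ := exists_carriesLargest_singleton hbdd
  rw [← Nat.Ico_succ_singleton] at hcmax
  have hinj (d : ℕ) (hd : d < c) :
      Disjoint (𝒜 d) (LinearMap.mulLeft k (GradedAlgebra.proj 𝒜 1 ℓ)).ker := by
    have hdisj := (h.map_mulLeft_pow_eq_and_disjoint hℓ hcmax).2
    rw [pow_one] at hdisj
    exact disjoint_ker_mulLeft_proj_one hstd hℓ hdisj hd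
  have hsurj (d : ℕ) (hd : d ≥ c) :
      (𝒜 d).map (LinearMap.mulLeft k (GradedAlgebra.proj 𝒜 1 ℓ)) = 𝒜 (d + 1) := by
    simpa only [pow_one] using h.map_mulLeft_proj_one_pow_eq hstd hℓ hcmax hd
  have hc := isPeak_finrank (proj_mem 1 ℓ) hinj hsurj
  refine isSL_iff.2 ⟨proj_mem 1 ℓ, fun d s => ?_⟩
  obtain ⟨t, htc, -, hW⟩ := hc.exists_carriesLargest_Ico s
  exact (lt_or_ge d t).imp (h.disjoint_ker_mulLeft_proj_one_pow hℓ hinj htc hW)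
    (h.map_mulLeft_proj_one_pow_eq hstd hℓ hW)

lemma IsSL.exists_isPeak_finrank [FiniteDimensional k A]
    (hstd : ∀ i, 𝒜 (i + 1) = 𝒜 1 * 𝒜 i) {ℓ : A} (h : IsSL 𝒜 ℓ) :
    ∃ c, IsPeak (fun d => finrank k (𝒜 d)) c := by
  classical
  have hℓ := (isSL_iff.1 h).2
  have hex : ∃ d, (𝒜 d).map (LinearMap.mulLeft k ℓ) = 𝒜 (d + 1) := by
    obtain ⟨N, hN⟩ := exists_forall_ge_eq_bot 𝒜
    exact ⟨N, by rw [hN N le_rfl, hN (N + 1) (Nat.le_succ N), Submodule.map_bot]⟩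
  refine ⟨Nat.find hex, isPeak_finrank h.1 (fun d hd => ?_) fun d hd => ?_⟩
  · have := (hℓ d 1).resolve_right (by rw [pow_one]; exact Nat.find_min hex hd)
    rwa [pow_one] at this
  · exact map_mulLeft_eq_of_le hstd h.1 hd (Nat.find_spec hex)

theorem IsSL.isJordanTypeOf [FiniteDimensional k A]
    (hstd : ∀ i, 𝒜 (i + 1) = 𝒜 1 * 𝒜 i) {ℓ : A} (h : IsSL 𝒜 ℓ) :
    IsJordanTypeOf (LinearMap.mulLeft k ℓ)
      (conjHilb (fun d => finrank k (𝒜 d)) (finrank k A)) := by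
  refine ⟨fun p hp => (Multiset.mem_filter.1 hp).2, fun s => ?_⟩
  obtain ⟨c, hc⟩ := h.exists_isPeak_finrank hstd
  obtain ⟨t, htc, hct, hW⟩ := hc.exists_carriesLargest_Ico s
  have hℓs := pow_mem_of_mem_one h.1 s
  have hinj (d : ℕ) (hd : d < t) : Disjoint (𝒜 d) (LinearMap.mulLeft k (ℓ ^ s)).ker :=
    finrank_map_eq_iff_disjoint_ker.1 ((h.2 d s).trans (min_eq_left (hc.le_add_of_lt htc hW hd)))
  have hsurj (d : ℕ) (hd : d ≥ t) : (𝒜 d).map (LinearMap.mulLeft k (ℓ ^ s)) = 𝒜 (d + s) :=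
    Submodule.eq_of_le_of_finrank_eq (map_mulLeft_le hℓs d)
      ((h.2 d s).trans (min_eq_right (hc.add_le_of_le hct hW hd)))
  have hsum := sum_map_sub_conjHilb_finrank hW
  rw [Nat.card_Ico, Nat.add_sub_cancel_left, Finset.coe_Ico] at hsum
  rw [hsum, LinearMap.pow_mulLeft, finrank_range_mulLeft_of_mem hℓs hinj hsurj]

end Graded

theorem has_SLJT_iff_strongLefschetz_of_standard_unimodal_general
    {k A : Type*} [Field k] [CommRing A] [Algebra k A]
    (𝒜 : ℕ → Submodule k A) [GradedAlgebra 𝒜] [FiniteDimensional k A]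
    (hstd : ∀ i : ℕ, 𝒜 (i + 1) = 𝒜 1 * 𝒜 i) :
    (∃ ℓ ∈ (⨆ i : ℕ, 𝒜 (i + 1)), IsJordanTypeOf (LinearMap.mulLeft k ℓ)
        (conjHilb (fun i => Module.finrank k (𝒜 i)) (Module.finrank k A))) ↔
      (∃ ℓ' : A, IsSL 𝒜 ℓ') := by
  rw [← gradedPart_Ici]
  constructor
  · rintro ⟨ℓ, hℓ, h⟩
    exact ⟨_, h.isSL_proj_one hstd hℓ⟩
  · rintro ⟨ℓ, h⟩
    exact ⟨ℓ, le_gradedPart 𝒜 Set.self_mem_Ici h.1, h.isJordanTypeOf hstd⟩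

/-- Let `A` be a standard graded Artinian algebra over a field `k` (i.e. `A` is
generated in degree 1 over `A_0 = k`) whose Hilbert function is unimodal.  Then
`A` has an element `ℓ ∈ m_A` of strong Lefschetz Jordan type
(`P_ℓ = H(A)^∨`) if and only if `A` has a strong Lefschetz element
`ℓ' ∈ A_1`. -/
theorem has_SLJT_iff_strongLefschetz_of_standard_unimodal
    {k A : Type*} [Field k] [CommRing A] [Algebra k A]
    (𝒜 : ℕ → Submodule k A) [GradedAlgebra 𝒜] [FiniteDimensional k A]
    (hconn : 𝒜 0 = Submodule.span k {(1 : A)})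
    (hstd : ∀ i : ℕ, 𝒜 (i + 1) = 𝒜 1 * 𝒜 i)
    (huni : Unimodal (fun i => Module.finrank k (𝒜 i))) :
    (∃ ℓ ∈ (⨆ i : ℕ, 𝒜 (i + 1)), IsJordanTypeOf (LinearMap.mulLeft k ℓ)
        (conjHilb (fun i => Module.finrank k (𝒜 i)) (Module.finrank k A))) ↔
      (∃ ℓ' : A, IsSL 𝒜 ℓ') :=
  has_SLJT_iff_strongLefschetz_of_standard_unimodal_general 𝒜 hstd
end

section
/- Let a ≤ b and m, n be positive integers with am = bn and n | m, and let A = k[x,y]/(x^a − y^b, xy) be graded with weights w(x) = m and w(y) = n (so the relations are homogeneous). Then the conjugate of the Hilbert function of A equals the conjugate of the Hilbert function of its associated graded algebra: H(A)^∨ = H(Gr_{m_A}(A))^∨. -/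
/-- The Hilbert function of the associated graded algebra `Gr_m(A) = ⊕ mⁱ/mⁱ⁺¹`
with respect to the ideal `m`:  `H i = dim_k mⁱ/mⁱ⁺¹ = dim_k mⁱ − dim_k mⁱ⁺¹`. -/
noncomputable def grHilb (k : Type*) {A : Type*} [Field k] [CommRing A] [Algebra k A]
    (m : Ideal A) : ℕ → ℕ :=
  fun i => Module.finrank k ((m ^ i).restrictScalars k)
    - Module.finrank k ((m ^ (i + 1)).restrictScalars k)

open MvPolynomial

section Conjugate

variable {ι κ : Type*}

lemma ncard_fiber_of_injective {α : Type*} {u : ι → α} (hu : u.Injective) (d : α) :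
    {i | u i = d}.ncard = (Set.range u).indicator 1 d := by
  by_cases hd : d ∈ Set.range u
  · obtain ⟨i, rfl⟩ := hd
    simp [hu.eq_iff]
  · have hempty : {i | u i = d} = ∅ := Set.eq_empty_of_forall_notMem fun i hi => hd ⟨i, hi⟩
    rw [hempty, Set.ncard_empty, Set.indicator_of_notMem hd]

lemma ncard_fiber_sumElim [Finite ι] [Finite κ] {α : Type*} (u : ι → α) (w : κ → α) (d : α) :
    {p | Sum.elim u w p = d}.ncard = {i | u i = d}.ncard + {j | w j = d}.ncard := by
  have hsplit : {p | Sum.elim u w p = d} = Sum.inl '' {i | u i = d} ∪ Sum.inr '' {j | w j = d} := by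
    ext (i | j) <;> simp
  rw [hsplit, Set.ncard_union_eq (by simp [Set.disjoint_left]),
    Set.ncard_image_of_injective _ Sum.inl_injective,
    Set.ncard_image_of_injective _ Sum.inr_injective]

lemma superlevel_indicator_add_indicator {α : Type*} {S T : Set α} (hST : S ⊆ T) (i : ℕ) :
    {d | i + 1 ≤ S.indicator 1 d + T.indicator (1 : α → ℕ) d} =
      if i = 0 then T else if i = 1 then S else ∅ := by
  classical
  ext d
  have hd := @hST d
  simp only [Set.indicator_apply, Pi.one_apply, Set.mem_ofPred_eq]
  grind

lemma conjHilb_ncard_fiber_sumElim [Finite ι] [Finite κ] {u : ι → ℕ} {w : κ → ℕ}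
    (hu : u.Injective) (hw : w.Injective) (huw : Set.range u ⊆ Set.range w) {N : ℕ} (hN : 2 ≤ N) :
    conjHilb (fun d => {p | Sum.elim u w p = d}.ncard) N =
      Multiset.filter (0 < ·) {Nat.card κ, Nat.card ι} := by
  have hpart (i : ℕ) : {d | i + 1 ≤ {p | Sum.elim u w p = d}.ncard}.ncard =
      if i = 0 then Nat.card κ else if i = 1 then Nat.card ι else 0 := by
    simp only [ncard_fiber_sumElim, ncard_fiber_of_injective hu, ncard_fiber_of_injective hw,
      superlevel_indicator_add_indicator huw]
    split_ifs
    · exact Set.ncard_range_of_injective hw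
    · exact Set.ncard_range_of_injective hu
    · exact Set.ncard_empty ℕ
  obtain ⟨t, rfl⟩ := Nat.exists_eq_add_of_le hN
  simp only [conjHilb, hpart]
  rw [Multiset.range_add, Multiset.map_add, Multiset.filter_add, Multiset.map_map]
  have htail : Multiset.filter (0 < ·) ((Multiset.range t).map
      ((fun i => if i = 0 then Nat.card κ else if i = 1 then Nat.card ι else 0) ∘ (2 + ·))) = 0 :=
    Multiset.filter_eq_nil.2 fun c hc => by
      obtain ⟨i, -, rfl⟩ := Multiset.mem_map.1 hc
      grind
  have hhead : (Multiset.range 2).map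
      (fun i => if i = 0 then Nat.card κ else if i = 1 then Nat.card ι else 0) =
      {Nat.card κ, Nat.card ι} := by
    simpa [Multiset.range_succ] using Multiset.pair_comm _ _
  rw [htail, hhead, add_zero]

end Conjugate

section LinearAlgebra

lemma finrank_span_image_eq_ncard {R M ι : Type*} [CommRing R] [Nontrivial R]
    [AddCommGroup M] [Module R M] [Finite ι] {e : ι → M} (he : LinearIndependent R e) (S : Set ι) :
    Module.finrank R (Submodule.span R (e '' S)) = S.ncard := by
  have := Fintype.ofFinite S
  have hS := finrank_span_eq_card (he.comp ((↑) : S → ι) Subtype.val_injective)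
  rwa [Set.range_comp, Subtype.range_coe, ← Nat.card_eq_fintype_card, Nat.card_coe_set_eq] at hS

lemma grHilb_eq_ncard {k A ι : Type*} [Field k] [CommRing A] [Algebra k A] [Finite ι]
    {e : ι → A} (he : LinearIndependent k e) (o : ι → ℕ) {𝔪 : Ideal A}
    (h𝔪 : ∀ s, (𝔪 ^ s).restrictScalars k = Submodule.span k (e '' {p | s ≤ o p})) (s : ℕ) :
    grHilb k 𝔪 s = {p | o p = s}.ncard := by
  have hlayer : {p | o p = s} = {p | s ≤ o p} \ {p | s + 1 ≤ o p} := by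
    ext p
    simp only [Set.mem_ofPred_eq, Set.mem_sdiff]
    lia
  have hsub : {p | s + 1 ≤ o p} ⊆ {p | s ≤ o p} := fun p hp => Nat.le_of_succ_le hp
  rw [grHilb, h𝔪, h𝔪, finrank_span_image_eq_ncard he, finrank_span_image_eq_ncard he, hlayer,
    Set.ncard_sdiff hsub]

end LinearAlgebra

section Basis

variable (k : Type*) [CommRing k] (a b : ℕ)

/-- The ideal `(x^a - y^b, xy)` of `k[x,y]`, with `x = X 0` and `y = X 1`. -/
noncomputable def relationIdeal : Ideal (MvPolynomial (Fin 2) k) :=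
  Ideal.span {X 0 ^ a - X 1 ^ b, X 0 * X 1}

/-- The exponents of the standard monomials, whose classes form a basis of
`k[x,y]/(x^a - y^b, xy)`: the left summand indexes `x, …, x^(a-1)`, the right one `1, y, …, y^b`. -/
noncomputable def standardExponent : Fin (a - 1) ⊕ Fin (b + 1) → Fin 2 →₀ ℕ :=
  Sum.elim (fun i => Finsupp.single 0 (i + 1)) (fun j => Finsupp.single 1 j)

/-- The class of a standard monomial in `k[x,y]/(x^a - y^b, xy)`. -/
noncomputable def standardClass (p : Fin (a - 1) ⊕ Fin (b + 1)) :
    MvPolynomial (Fin 2) k ⧸ relationIdeal k a b :=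
  Ideal.Quotient.mkₐ k _ (monomial (standardExponent a b p) 1)

variable {k a b}

lemma standardExponent_injective : (standardExponent a b).Injective := by
  rintro (i | j) (i' | j') h <;>
    simp only [standardExponent, Sum.elim_inl, Sum.elim_inr, Finsupp.single_eq_single_iff] at h <;>
    grind

lemma standardExponent_ne_single_zero (ha : 0 < a) (p : Fin (a - 1) ⊕ Fin (b + 1)) :
    standardExponent a b p ≠ Finsupp.single 0 a := by
  rcases p with i | j <;>
    simp only [standardExponent, Sum.elim_inl, Sum.elim_inr, ne_eq,
      Finsupp.single_eq_single_iff] <;>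
    grind

lemma X_zero_mul_X_one_mem_relationIdeal :
    (X 0 * X 1 : MvPolynomial (Fin 2) k) ∈ relationIdeal k a b :=
  Ideal.subset_span (by simp)

lemma X_zero_pow_sub_X_one_pow_mem_relationIdeal :
    (X 0 ^ a - X 1 ^ b : MvPolynomial (Fin 2) k) ∈ relationIdeal k a b :=
  Ideal.subset_span (by simp)

lemma X_zero_pow_succ_mem_relationIdeal (hb : 0 < b) :
    (X 0 ^ (a + 1) : MvPolynomial (Fin 2) k) ∈ relationIdeal k a b := by
  obtain ⟨b, rfl⟩ := Nat.exists_eq_add_one_of_ne_zero hb.ne'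
  exact Ideal.mem_span_pair.2 ⟨X 0, X 1 ^ b, by ring⟩

lemma X_one_pow_succ_mem_relationIdeal (ha : 0 < a) :
    (X 1 ^ (b + 1) : MvPolynomial (Fin 2) k) ∈ relationIdeal k a b := by
  obtain ⟨a, rfl⟩ := Nat.exists_eq_add_one_of_ne_zero ha.ne'
  exact Ideal.mem_span_pair.2 ⟨-X 1, X 0 ^ a, by ring⟩

lemma monomial_mem_relationIdeal_or (ha : 0 < a) (hb : 0 < b) (c : Fin 2 →₀ ℕ) :
    (monomial c 1 : MvPolynomial (Fin 2) k) ∈ relationIdeal k a b ∨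
      c = Finsupp.single 0 a ∨ ∃ p, standardExponent a b p = c := by
  rw [monomial_fin_two, C_1, one_mul]
  by_cases h0 : c 0 = 0
  · by_cases hc : c 1 ≤ b
    · refine .inr (.inr ⟨.inr ⟨c 1, by lia⟩, Finsupp.ext (Fin.forall_fin_two.2 ?_)⟩)
      simp [standardExponent, h0]
    · exact .inl (Ideal.mem_of_dvd _ (dvd_mul_of_dvd_right (pow_dvd_pow _ (by lia)) _)
        (X_one_pow_succ_mem_relationIdeal ha))
  by_cases h1 : c 1 = 0
  · rcases lt_trichotomy (c 0) a with hc | hc | hc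
    · refine .inr (.inr ⟨.inl ⟨c 0 - 1, by lia⟩, Finsupp.ext (Fin.forall_fin_two.2 ?_)⟩)
      simp [standardExponent, h1, Nat.sub_add_cancel (Nat.pos_of_ne_zero h0)]
    · exact .inr (.inl (Finsupp.ext (Fin.forall_fin_two.2 (by simp [hc, h1]))))
    · exact .inl (Ideal.mem_of_dvd _ (dvd_mul_of_dvd_left (pow_dvd_pow _ hc) _)
        (X_zero_pow_succ_mem_relationIdeal hb))
  · exact .inl (Ideal.mem_of_dvd _ (mul_dvd_mul (dvd_pow_self _ h0) (dvd_pow_self _ h1))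
      X_zero_mul_X_one_mem_relationIdeal)

lemma map_restrictSupport_eq_span_standardClass (ha : 0 < a) (hb : 0 < b)
    {C : Set (Fin 2 →₀ ℕ)} (hC : Finsupp.single 0 a ∈ C → Finsupp.single 1 b ∈ C) :
    (restrictSupport k C).map (Ideal.Quotient.mkₐ k (relationIdeal k a b)).toLinearMap =
      Submodule.span k (standardClass k a b '' {p | standardExponent a b p ∈ C}) := by
  rw [restrictSupport_eq_span, Submodule.map_span, Set.image_image]
  refine le_antisymm (Submodule.span_le.2 ?_) (Submodule.span_mono ?_)
  · rintro _ ⟨c, hc, rfl⟩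
    rcases monomial_mem_relationIdeal_or (k := k) ha hb c with hmem | rfl | ⟨p, rfl⟩
    · have hzero : Ideal.Quotient.mkₐ k (relationIdeal k a b) (monomial c 1) = 0 := by
        rwa [Ideal.Quotient.mkₐ_eq_mk, Ideal.Quotient.eq_zero_iff_mem]
      simp [hzero]
    · have hlast : standardExponent a b (.inr (Fin.last b)) = Finsupp.single 1 b := rfl
      have hmem := X_zero_pow_sub_X_one_pow_mem_relationIdeal (k := k) (a := a) (b := b)
      rw [X_pow_eq_monomial, X_pow_eq_monomial, ← hlast] at hmem
      exact Submodule.subset_span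
        ⟨.inr (Fin.last b), hC hc, (Ideal.Quotient.eq.2 hmem).symm⟩
    · exact Submodule.subset_span ⟨p, hc, rfl⟩
  · rintro _ ⟨p, hp, rfl⟩
    exact ⟨_, hp, rfl⟩

lemma span_standardClass (ha : 0 < a) (hb : 0 < b) :
    Submodule.span k (Set.range (standardClass k a b)) = ⊤ := by
  have h := map_restrictSupport_eq_span_standardClass (k := k) (C := Set.univ) ha hb
    fun _ => trivial
  rw [restrictSupport_univ, Submodule.map_top,
    LinearMap.range_eq_top.2 (Ideal.Quotient.mkₐ_surjective k _)] at h
  simpa using h.symm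

lemma coeff_relation (g h : MvPolynomial (Fin 2) k) (c : Fin 2 →₀ ℕ) :
    coeff c (g * (X 0 ^ a - X 1 ^ b) + h * (X 0 * X 1)) =
      (if a ≤ c 0 then coeff (c - Finsupp.single 0 a) g else 0) -
        (if b ≤ c 1 then coeff (c - Finsupp.single 1 b) g else 0) +
        if c 1 ≠ 0 ∧ c 0 ≠ 0 then
          coeff (c - Finsupp.single 1 1 - Finsupp.single 0 1) h else 0 := by
  rw [mul_sub, ← mul_assoc, X_pow_eq_monomial, X_pow_eq_monomial]
  simp only [coeff_add, coeff_sub, coeff_mul_monomial', coeff_mul_X', Finsupp.single_le_iff,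
    Finsupp.mem_support_iff, mul_one]
  simp [ite_and]

lemma coeff_eq_zero_of_mem_relationIdeal {f : MvPolynomial (Fin 2) k}
    (hf : f ∈ relationIdeal k a b) {c : Fin 2 →₀ ℕ} (h0 : c 0 < a) (h1 : c 1 < b)
    (h01 : c 0 = 0 ∨ c 1 = 0) : coeff c f = 0 := by
  obtain ⟨g, h, rfl⟩ := Ideal.mem_span_pair.1 hf
  rw [coeff_relation, if_neg h0.not_ge, if_neg h1.not_ge, if_neg (by lia), sub_zero, add_zero]

lemma coeff_add_coeff_eq_zero_of_mem_relationIdeal (ha : 0 < a) (hb : 0 < b)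
    {f : MvPolynomial (Fin 2) k} (hf : f ∈ relationIdeal k a b) :
    coeff (Finsupp.single 0 a) f + coeff (Finsupp.single 1 b) f = 0 := by
  obtain ⟨g, h, rfl⟩ := Ideal.mem_span_pair.1 hf
  rw [coeff_relation, coeff_relation]
  simp [ha.ne', hb.ne']

lemma disjoint_restrictSupport_relationIdeal (ha : 0 < a) (hb : 0 < b) :
    Disjoint (restrictSupport k (Set.range (standardExponent a b)))
      ((relationIdeal k a b).restrictScalars k) := by
  refine Submodule.disjoint_def.2 fun f hsupp hf => MvPolynomial.ext _ _ fun c => ?_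
  have hcoeff (e) (he : ∀ p, standardExponent a b p ≠ e) : coeff e f = 0 :=
    notMem_support_iff.1 fun hmem => (hsupp hmem).elim he
  obtain ⟨p, rfl⟩ | hc := em (∃ p, standardExponent a b p = c)
  swap
  · exact hcoeff c (not_exists.1 hc)
  have hlast := coeff_add_coeff_eq_zero_of_mem_relationIdeal ha hb hf
  rw [hcoeff _ (standardExponent_ne_single_zero ha), zero_add] at hlast
  rcases p with i | j
  · have hi : (i : ℕ) + 1 < a := by lia
    apply coeff_eq_zero_of_mem_relationIdeal hf <;> simp [standardExponent, hi, hb]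
  · obtain hj | hj := (Nat.le_of_lt_succ j.2).eq_or_lt
    · rwa [← hj] at hlast
    · apply coeff_eq_zero_of_mem_relationIdeal hf <;> simp [standardExponent, hj, ha]

lemma linearIndependent_standardClass (ha : 0 < a) (hb : 0 < b) :
    LinearIndependent k (standardClass k a b) := by
  have hmonomial : LinearIndependent k (fun p => monomial (standardExponent a b p) (1 : k)) := by
    simpa only [Function.comp_def, coe_basisMonomials] using
      (basisMonomials (Fin 2) k).linearIndependent.comp _ standardExponent_injective
  refine hmonomial.map (f := (Ideal.Quotient.mkₐ k (relationIdeal k a b)).toLinearMap) ?_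
  have hspan := restrictSupport_eq_span (R := k) (Set.range (standardExponent a b))
  rw [← Set.range_comp] at hspan
  have hker : (Ideal.Quotient.mkₐ k (relationIdeal k a b)).toLinearMap.ker =
      (relationIdeal k a b).restrictScalars k := by
    ext f
    simp [Ideal.Quotient.eq_zero_iff_mem]
  rw [hker]
  exact hspan ▸ disjoint_restrictSupport_relationIdeal ha hb

end Basis

section Hilbert

lemma weight_standardExponent (a b m n : ℕ) :
    (fun p => Finsupp.weight ![m, n] (standardExponent a b p)) =
      Sum.elim (fun i : Fin (a - 1) => (i + 1 : ℕ) * m) (fun j : Fin (b + 1) => (j : ℕ) * n) := by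
  ext (i | j) <;> simp [standardExponent, Finsupp.weight_single, add_mul]

lemma conjHilb_weight_standardExponent {a b m n N : ℕ} (hm : 0 < m) (hn : 0 < n) (hdvd : n ∣ m)
    (hle : a * m ≤ b * n) (hN : 2 ≤ N) :
    conjHilb (fun d => {p | Finsupp.weight ![m, n] (standardExponent a b p) = d}.ncard) N =
      Multiset.filter (0 < ·) {b + 1, a - 1} := by
  have hx : (fun i : Fin (a - 1) => (i + 1 : ℕ) * m).Injective := fun i j h =>
    Fin.ext (by simpa [hm.ne'] using h)
  have hy : (fun j : Fin (b + 1) => (j : ℕ) * n).Injective := fun i j h =>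
    Fin.ext (by simpa [hn.ne'] using h)
  have hxy : Set.range (fun i : Fin (a - 1) => (i + 1 : ℕ) * m) ⊆
      Set.range fun j : Fin (b + 1) => (j : ℕ) * n := by
    obtain ⟨q, rfl⟩ := hdvd
    have haq : a * q ≤ b := by
      refine Nat.le_of_mul_le_mul_right ?_ hn
      rwa [mul_assoc, mul_comm q]
    rintro _ ⟨i, rfl⟩
    have hi : (i + 1) * q ≤ a * q := Nat.mul_le_mul_right q (by lia)
    exact ⟨⟨(i + 1) * q, by lia⟩, by ring⟩
  simpa [← weight_standardExponent] using conjHilb_ncard_fiber_sumElim hx hy hxy hN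

variable {k : Type*} [CommRing k] {a b : ℕ}

lemma finrank_quotient_relationIdeal [Nontrivial k] (ha : 0 < a) (hb : 0 < b) :
    Module.finrank k (MvPolynomial (Fin 2) k ⧸ relationIdeal k a b) = a + b := by
  have h := finrank_span_eq_card (linearIndependent_standardClass (k := k) ha hb)
  rw [span_standardClass ha hb, finrank_top, Fintype.card_sum, Fintype.card_fin,
    Fintype.card_fin] at h
  lia

lemma span_isWeightedHomogeneous_eq_span_standardClass (ha : 0 < a) (hb : 0 < b) {m n : ℕ}
    (hmn : a * m = b * n) (d : ℕ) :
    Submodule.span k (Ideal.Quotient.mk (relationIdeal k a b) ''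
      {f | f.IsWeightedHomogeneous ![m, n] d}) =
      Submodule.span k (standardClass k a b ''
        {p | Finsupp.weight ![m, n] (standardExponent a b p) = d}) := by
  have hmap := map_restrictSupport_eq_span_standardClass (k := k) ha hb
    (C := {c | Finsupp.weight ![m, n] c = d}) (by simp [Finsupp.weight_single, hmn])
  rw [restrictSupport, ← weightedHomogeneousSubmodule_eq_finsupp_supported,
    ← Submodule.span_eq (weightedHomogeneousSubmodule k ![m, n] d), Submodule.map_span] at hmap
  exact hmap

lemma restrictScalars_pow_eq_span_standardClass (ha : 0 < a) (hab : a ≤ b) (s : ℕ) :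
    ((Ideal.span {Ideal.Quotient.mk (relationIdeal k a b) (X 0),
      Ideal.Quotient.mk (relationIdeal k a b) (X 1)}) ^ s).restrictScalars k =
      Submodule.span k (standardClass k a b '' {p | s ≤ (standardExponent a b p).degree}) := by
  have hvars : Ideal.span {Ideal.Quotient.mk (relationIdeal k a b) (X 0),
      Ideal.Quotient.mk (relationIdeal k a b) (X 1)} =
      (idealOfVars (Fin 2) k).map (Ideal.Quotient.mk (relationIdeal k a b)) := by
    rw [idealOfVars, Ideal.map_span]
    congr 1
    ext z
    simp [Fin.exists_fin_two, eq_comm]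
  have hmap := map_restrictSupport_eq_span_standardClass (k := k) ha (ha.trans_le hab)
    (C := Finsupp.degree ⁻¹' Set.Ici s) (by simpa using fun h => h.trans hab)
  rw [hvars, ← Ideal.map_pow, pow_idealOfVars]
  refine Eq.trans ?_ hmap
  ext z
  exact Ideal.mem_map_iff_of_surjective _ Ideal.Quotient.mk_surjective

lemma conjHilb_finrank_span_isWeightedHomogeneous [Nontrivial k] (ha : 0 < a) (hb : 0 < b)
    {m n : ℕ} (hm : 0 < m) (hn : 0 < n) (hmn : a * m = b * n) (hdvd : n ∣ m) :
    conjHilb (fun d => Module.finrank k (Submodule.span k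
        (Ideal.Quotient.mk (relationIdeal k a b) '' {f | f.IsWeightedHomogeneous ![m, n] d})))
      (Module.finrank k (MvPolynomial (Fin 2) k ⧸ relationIdeal k a b)) =
      Multiset.filter (0 < ·) {b + 1, a - 1} := by
  have hfinrank (d : ℕ) : Module.finrank k (Submodule.span k
      (Ideal.Quotient.mk (relationIdeal k a b) '' {f | f.IsWeightedHomogeneous ![m, n] d})) =
      {p | Finsupp.weight ![m, n] (standardExponent a b p) = d}.ncard := by
    rw [span_isWeightedHomogeneous_eq_span_standardClass ha hb hmn,
      finrank_span_image_eq_ncard (linearIndependent_standardClass ha hb)]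
  rw [funext hfinrank, finrank_quotient_relationIdeal ha hb]
  exact conjHilb_weight_standardExponent hm hn hdvd hmn.le (by lia)

lemma conjHilb_grHilb_quotient_relationIdeal {k : Type*} [Field k] (ha : 0 < a) (hab : a ≤ b) :
    conjHilb (grHilb k (Ideal.span {Ideal.Quotient.mk (relationIdeal k a b) (X 0),
        Ideal.Quotient.mk (relationIdeal k a b) (X 1)}))
      (Module.finrank k (MvPolynomial (Fin 2) k ⧸ relationIdeal k a b)) =
      Multiset.filter (0 < ·) {b + 1, a - 1} := by
  have hb := ha.trans_le hab
  have hweight (s : ℕ) : grHilb k (Ideal.span {Ideal.Quotient.mk (relationIdeal k a b) (X 0),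
      Ideal.Quotient.mk (relationIdeal k a b) (X 1)}) s =
      {p | Finsupp.weight ![1, 1] (standardExponent a b p) = s}.ncard := by
    have hone : (![1, 1] : Fin 2 → ℕ) = fun _ => 1 := by
      ext i
      fin_cases i <;> rfl
    rw [hone, ← Finsupp.degree_eq_weight_one]
    exact grHilb_eq_ncard (linearIndependent_standardClass (k := k) ha hb)
      (fun p => (standardExponent a b p).degree)
      (restrictScalars_pow_eq_span_standardClass (k := k) ha hab) s
  rw [funext hweight, finrank_quotient_relationIdeal ha hb]
  exact conjHilb_weight_standardExponent one_pos one_pos (one_dvd 1) (by lia) (by lia)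

end Hilbert

/-- Let `a ≤ b` and `m`, `n` be positive integers with `a·m = b·n` and `n ∣ m`,
and let `A = k[x,y]/(x^a − y^b, xy)` be graded with weights `w(x) = m`,
`w(y) = n` (so the relations are homogeneous).  Then the conjugate of the
Hilbert function of `A` equals the conjugate of the Hilbert function of its
associated graded algebra:  `H(A)^∨ = H(Gr_{m_A}(A))^∨`. -/
theorem conj_hilbert_eq_conj_hilbert_assocGraded
    {k : Type} [Field k] (a b m n : ℕ)
    (ha : 0 < a) (hb : 0 < b) (hm : 0 < m) (hn : 0 < n)
    (hab : a ≤ b) (heq : a * m = b * n) (hdvd : n ∣ m)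
    (I : Ideal (MvPolynomial (Fin 2) k))
    (hI : I = Ideal.span {X 0 ^ a - X 1 ^ b, X 0 * X 1})
    (𝒜 : ℕ → Submodule k (MvPolynomial (Fin 2) k ⧸ I))
    (h𝒜 : ∀ d : ℕ, 𝒜 d = Submodule.span k
      ((Ideal.Quotient.mk I) '' {f | f.IsWeightedHomogeneous ![m, n] d}))
    (mI : Ideal (MvPolynomial (Fin 2) k ⧸ I))
    (hmI : mI = Ideal.span {Ideal.Quotient.mk I (X 0), Ideal.Quotient.mk I (X 1)}) :
    conjHilb (fun d => Module.finrank k (𝒜 d))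
        (Module.finrank k (MvPolynomial (Fin 2) k ⧸ I)) =
      conjHilb (grHilb k mI) (Module.finrank k (MvPolynomial (Fin 2) k ⧸ I)) := by
  obtain rfl : I = relationIdeal k a b := hI
  obtain rfl : 𝒜 = _ := funext h𝒜
  rw [hmI, conjHilb_finrank_span_isWeightedHomogeneous ha hb hm hn heq hdvd,
    conjHilb_grHilb_quotient_relationIdeal ha hab]
end
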